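/- arXiv:2312.09889 — 9 statements merged into one kernel-verified Lean document; each statement's English description precedes it below -/
import Mathlib

section
/- The functor ι : Δ → ∗⫽Δ sending [n] to ([n], n) and a monotone map to itself is fully faithful, and it admits a right adjoint κ : ∗⫽Δ → Δ sending ([n], k) to [k] and a morphism a : ([n], k) → ([m], l) to the restricted monotone map [k] → [l], i ↦ a(i) (well defined since a(i) ≤ a(k) ≤ l). -/
open CategoryTheory

/-- An object of the lax slice category `∗⫽Δ`: a pair `([n], k)` with `0 ≤ k ≤ n`. -/
structure LaxPt where
  obj : SimplexCategory
  pt : Fin (obj.len + 1)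

/-- A morphism `([n], k) ⟶ ([m], l)` of `∗⫽Δ`: a monotone map `a : [n] → [m]`
with `a k ≤ l`. -/
@[ext]
structure LaxPt.Hom (A B : LaxPt) where
  map : A.obj ⟶ B.obj
  le : map.toOrderHom A.pt ≤ B.pt

instance : Category LaxPt where
  Hom := LaxPt.Hom
  id A := ⟨𝟙 A.obj, le_refl _⟩
  comp := fun {A B C} (f : LaxPt.Hom A B) (g : LaxPt.Hom B C) =>
    ⟨f.map ≫ g.map, le_trans (g.map.toOrderHom.monotone f.le) g.le⟩
  id_comp := fun {A B} (f : LaxPt.Hom A B) => by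
    apply LaxPt.Hom.ext; exact Category.id_comp f.map
  comp_id := fun {A B} (f : LaxPt.Hom A B) => by
    apply LaxPt.Hom.ext; exact Category.comp_id f.map
  assoc := fun f g h => by
    apply LaxPt.Hom.ext; exact Category.assoc _ _ _

/-- The functor `ι : Δ ⥤ ∗⫽Δ`, `[n] ↦ ([n], n)`, sending a monotone map to itself. -/
def iota : SimplexCategory ⥤ LaxPt where
  obj n := ⟨n, Fin.last n.len⟩
  map {n m} f := LaxPt.Hom.mk f (Fin.le_last _)
  map_id _ := rfl
  map_comp _ _ := rfl

/-- The functor `κ : ∗⫽Δ ⥤ Δ`, `([n], k) ↦ [k]`, sending `a : ([n], k) ⟶ ([m], l)` to the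
restricted monotone map `[k] → [l]`, `i ↦ a i` (well defined since `a i ≤ a k ≤ l`). -/
def kappa : LaxPt ⥤ SimplexCategory where
  obj A := SimplexCategory.mk (A.pt : ℕ)
  map := fun {A B} (f : LaxPt.Hom A B) => SimplexCategory.mkHom
    ⟨fun i => ⟨f.map.toOrderHom (Fin.castLE (Nat.succ_le_succ A.pt.is_le) i),
        by
          have h1 : (f.map.toOrderHom (Fin.castLE (Nat.succ_le_succ A.pt.is_le) i) : ℕ) ≤
              (f.map.toOrderHom A.pt : ℕ) :=
            f.map.toOrderHom.monotone (by simp [Fin.le_def]; exact i.is_le)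
          have h2 : (f.map.toOrderHom A.pt : ℕ) ≤ (B.pt : ℕ) := f.le
          omega⟩,
      fun i j hij => by
        apply Fin.mk_le_mk.mpr
        apply f.map.toOrderHom.monotone
        rw [Fin.le_def]
        exact hij⟩
  map_id A := by
    apply SimplexCategory.Hom.ext
    ext i
    rfl
  map_comp f g := by
    apply SimplexCategory.Hom.ext
    ext i
    rfl

/-- `ι` is fully faithful and admits `κ` as a right adjoint. -/
theorem iota_fullyFaithful_and_adjoint :
    iota.Full ∧ iota.Faithful ∧ Nonempty (iota ⊣ kappa) := by
  refine ⟨⟨fun {X Y} (f : LaxPt.Hom _ _) => ⟨f.map, rfl⟩⟩, ⟨fun {X Y f g} h => ?_⟩, ⟨?_⟩⟩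
  · exact congrArg LaxPt.Hom.map h
  · exact Adjunction.mkOfUnitCounit
      { unit :=
          { app := fun n => (𝟙 n : n ⟶ n)
            naturality := fun X Y f => by
              apply SimplexCategory.Hom.ext
              ext i
              rfl }
        counit :=
          { app := fun A => LaxPt.Hom.mk
              (SimplexCategory.mkHom
                ⟨fun i => Fin.castLE (Nat.succ_le_succ A.pt.is_le) i, fun i j hij => hij⟩)
              (le_refl (A.pt : ℕ))
            naturality := fun X Y f => by
              apply LaxPt.Hom.ext
              apply SimplexCategory.Hom.ext
              ext i
              rfl }
        left_triangle := by
          ext n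
          apply LaxPt.Hom.ext
          apply SimplexCategory.Hom.ext
          ext i
          rfl
        right_triangle := by
          ext A : 2
          apply SimplexCategory.Hom.ext
          ext i
          rfl }
end

section
/- For every simplicial set X, the functor ι_X : Δ/X → (∗⫽Δ)/X sending ([n], x) to ([n], n, x) and a morphism to itself is fully faithful, and it admits a right adjoint κ_X : (∗⫽Δ)/X → Δ/X sending ([m], l, y) to ([l], X(incl)(y)), where incl : [l] ⊆ [m] is the inclusion of the initial segment. -/
open CategoryTheory Simplicial

universe u

/-- An object of the category of simplices `Δ/X` of a simplicial set `X`: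
a pair `([n], x)` with `x ∈ X_n`. -/
structure SplxOver (X : SSet.{u}) where
  obj : SimplexCategory
  simplex : X.obj (Opposite.op obj)

/-- A morphism `([n], x) ⟶ ([m], y)` of `Δ/X`: a monotone map `a : [n] → [m]` with
`X(a)(y) = x`. -/
@[ext]
structure SplxOver.Hom {X : SSet.{u}} (A B : SplxOver X) where
  map : A.obj ⟶ B.obj
  fac : X.map map.op B.simplex = A.simplex

instance {X : SSet.{u}} : Category (SplxOver X) where
  Hom := SplxOver.Hom
  id A := ⟨𝟙 A.obj, by rw [op_id, FunctorToTypes.map_id_apply]⟩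
  comp := fun {A B C} (f : SplxOver.Hom A B) (g : SplxOver.Hom B C) =>
    ⟨f.map ≫ g.map, by rw [op_comp, FunctorToTypes.map_comp_apply, g.fac, f.fac]⟩
  id_comp := fun {A B} (f : SplxOver.Hom A B) => by
    apply SplxOver.Hom.ext; exact Category.id_comp f.map
  comp_id := fun {A B} (f : SplxOver.Hom A B) => by
    apply SplxOver.Hom.ext; exact Category.comp_id f.map
  assoc f g h := by
    apply SplxOver.Hom.ext; exact Category.assoc _ _ _

/-- A morphism of `Δ/X` is a last-vertex morphism if it preserves the last vertex. -/
def lastVertex (X : SSet.{u}) : MorphismProperty (SplxOver X) :=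
  fun _ _ a => a.map.toOrderHom (Fin.last _) = Fin.last _
/-- An object of the category `(∗⫽Δ)/X`: a triple `([n], k, x)` with `0 ≤ k ≤ n` and
`x ∈ X_n`. -/
structure LaxPtOver (X : SSet.{u}) where
  obj : SimplexCategory
  pt : Fin (obj.len + 1)
  simplex : X.obj (Opposite.op obj)

/-- A morphism `([n], k, x) ⟶ ([m], l, y)` of `(∗⫽Δ)/X`: a monotone map `a : [n] → [m]`
with `a k ≤ l` and `X(a)(y) = x`. -/
@[ext]
structure LaxPtOver.Hom {X : SSet.{u}} (A B : LaxPtOver X) where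
  map : A.obj ⟶ B.obj
  le : map.toOrderHom A.pt ≤ B.pt
  fac : X.map map.op B.simplex = A.simplex

instance {X : SSet.{u}} : Category (LaxPtOver X) where
  Hom := LaxPtOver.Hom
  id A := ⟨𝟙 A.obj, le_refl _, by rw [op_id, FunctorToTypes.map_id_apply]⟩
  comp := fun {A B C} (f : LaxPtOver.Hom A B) (g : LaxPtOver.Hom B C) =>
    ⟨f.map ≫ g.map, le_trans (g.map.toOrderHom.monotone f.le) g.le,
      by rw [op_comp, FunctorToTypes.map_comp_apply, g.fac, f.fac]⟩
  id_comp := fun {A B} (f : LaxPtOver.Hom A B) => by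
    apply LaxPtOver.Hom.ext; exact Category.id_comp f.map
  comp_id := fun {A B} (f : LaxPtOver.Hom A B) => by
    apply LaxPtOver.Hom.ext; exact Category.comp_id f.map
  assoc f g h := by
    apply LaxPtOver.Hom.ext; exact Category.assoc _ _ _

/-- The functor `ι_X : Δ/X ⥤ (∗⫽Δ)/X`, `([n], x) ↦ ([n], n, x)`, sending a morphism
to itself. -/
def iotaOver (X : SSet.{u}) : SplxOver X ⥤ LaxPtOver X where
  obj A := ⟨A.obj, Fin.last A.obj.len, A.simplex⟩
  map := fun {A B} (f : SplxOver.Hom A B) =>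
    LaxPtOver.Hom.mk f.map (Fin.le_last _) f.fac
  map_id _ := rfl
  map_comp _ _ := rfl
/-- The inclusion `[k] ⊆ [n]` of the initial segment determined by an object
`([n], k, x)` of `(∗⫽Δ)/X`. -/
def segIncl {X : SSet.{u}} (A : LaxPtOver X) :
    SimplexCategory.mk (A.pt : ℕ) ⟶ A.obj :=
  SimplexCategory.mkHom
    ⟨Fin.castLE (Nat.succ_le_succ A.pt.is_le), fun i j hij => by exact hij⟩

/-- The restriction `[k] → [l]`, `i ↦ a i`, of a morphism `a : ([n], k, x) ⟶ ([m], l, y)`. -/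
def laxRestrict {X : SSet.{u}} {A B : LaxPtOver X} (f : LaxPtOver.Hom A B) :
    SimplexCategory.mk (A.pt : ℕ) ⟶ SimplexCategory.mk (B.pt : ℕ) :=
  SimplexCategory.mkHom
    ⟨fun i => ⟨f.map.toOrderHom (Fin.castLE (Nat.succ_le_succ A.pt.is_le) i),
        by
          have h1 : (f.map.toOrderHom (Fin.castLE (Nat.succ_le_succ A.pt.is_le) i) : ℕ) ≤
              (f.map.toOrderHom A.pt : ℕ) :=
            f.map.toOrderHom.monotone (by rw [Fin.le_def]; exact i.is_le)
          have h2 : (f.map.toOrderHom A.pt : ℕ) ≤ (B.pt : ℕ) := f.le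
          omega⟩,
      fun i j hij => by
        apply Fin.mk_le_mk.mpr
        apply f.map.toOrderHom.monotone
        rw [Fin.le_def]
        exact hij⟩

lemma laxRestrict_comm {X : SSet.{u}} {A B : LaxPtOver X} (f : LaxPtOver.Hom A B) :
    laxRestrict f ≫ segIncl B = segIncl A ≫ f.map := rfl

/-- The functor `κ_X : (∗⫽Δ)/X ⥤ Δ/X`, `([m], l, y) ↦ ([l], X(incl)(y))`, where
`incl : [l] ⊆ [m]` is the inclusion of the initial segment. -/
def kappaOver (X : SSet.{u}) : LaxPtOver X ⥤ SplxOver X where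
  obj A := ⟨SimplexCategory.mk (A.pt : ℕ), X.map (segIncl A).op A.simplex⟩
  map := fun {A B} (f : LaxPtOver.Hom A B) =>
    SplxOver.Hom.mk (laxRestrict f) (by
      rw [← FunctorToTypes.map_comp_apply, ← op_comp, laxRestrict_comm, op_comp,
        FunctorToTypes.map_comp_apply, f.fac])
  map_id _ := rfl
  map_comp _ _ := rfl

/-- The unit of the adjunction at `A`. -/
def iotaKappaUnit {X : SSet.{u}} (A : SplxOver X) :
    SplxOver.Hom A ((kappaOver X).obj ((iotaOver X).obj A)) where
  map := 𝟙 A.obj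
  fac := by
    have h : segIncl ((iotaOver X).obj A) = 𝟙 A.obj := rfl
    change X.map (𝟙 A.obj).op (X.map (segIncl ((iotaOver X).obj A)).op A.simplex) = A.simplex
    rw [h]
    erw [FunctorToTypes.map_id_apply, FunctorToTypes.map_id_apply]

/-- The counit of the adjunction at `B`. -/
def iotaKappaCounit {X : SSet.{u}} (B : LaxPtOver X) :
    LaxPtOver.Hom ((iotaOver X).obj ((kappaOver X).obj B)) B where
  map := segIncl B
  le := le_of_eq (Fin.ext rfl)
  fac := rfl

/-- The adjunction. -/
def iotaKappaAdj (X : SSet.{u}) : iotaOver X ⊣ kappaOver X :=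
  Adjunction.mkOfUnitCounit
    { unit :=
        { app := fun A => iotaKappaUnit A
          naturality := fun _ _ _ => SplxOver.Hom.ext rfl }
      counit :=
        { app := fun B => iotaKappaCounit B
          naturality := fun _ _ _ => LaxPtOver.Hom.ext rfl }
      left_triangle := by
        ext A
        exact LaxPtOver.Hom.ext rfl
      right_triangle := by
        ext B
        exact SplxOver.Hom.ext rfl }

/-- for every simplicial set `X`, the functor `ι_X : Δ/X ⥤ (∗⫽Δ)/X`,
`([n], x) ↦ ([n], n, x)`, is fully faithful and admits `κ_X` as a right adjoint. -/
theorem iotaOver_fullyFaithful_and_adjoint (X : SSet.{u}) :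
    (iotaOver X).Full ∧ (iotaOver X).Faithful ∧ Nonempty (iotaOver X ⊣ kappaOver X) := by
  refine ⟨⟨fun {A B} f => ?_⟩, ⟨fun {A B} f g h => ?_⟩, ⟨iotaKappaAdj X⟩⟩
  · exact ⟨SplxOver.Hom.mk (LaxPtOver.Hom.map f) (LaxPtOver.Hom.fac f), rfl⟩
  · apply SplxOver.Hom.ext
    exact congrArg LaxPtOver.Hom.map h
end

section
/- Let F : C ⥤ D and G : D ⥤ C be functors with an adjunction F ⊣ G, and let W, V be classes of morphisms of C, D respectively such that F sends morphisms of W into V, G sends morphisms of V into W, every component of the unit id → G∘F lies in W, and every component of the counit F∘G → id lies in V. Then the composite of F with the localization functor q : D → D[V⁻¹] inverts W, and the induced functor C[W⁻¹] → D[V⁻¹] is an equivalence of categories; equivalently, q ∘ F : C ⥤ D[V⁻¹] exhibits D[V⁻¹] as the localization of C at W. -/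
open CategoryTheory

/-- given an adjunction `F ⊣ G` and classes of morphisms `W`, `V` such that
`F(W) ⊆ V`, `G(V) ⊆ W`, the unit components lie in `W` and the counit components lie in `V`,
the composite `q ∘ F : C ⥤ D[V⁻¹]` of `F` with the localization functor `q : D ⥤ D[V⁻¹]`
inverts `W` and exhibits `D[V⁻¹]` as the localization of `C` at `W`. -/
theorem adjunction_descends_to_localization
    {C : Type*} {D : Type*} [Category C] [Category D]
    (F : C ⥤ D) (G : D ⥤ C) (adj : F ⊣ G)
    (W : MorphismProperty C) (V : MorphismProperty D)
    (hF : ∀ ⦃X Y : C⦄ (f : X ⟶ Y), W f → V (F.map f))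
    (hG : ∀ ⦃X Y : D⦄ (g : X ⟶ Y), V g → W (G.map g))
    (hunit : ∀ X : C, W (adj.unit.app X))
    (hcounit : ∀ Y : D, V (adj.counit.app Y)) :
    (F ⋙ V.Q).IsLocalization W := by
  have h₁ : W.IsInvertedBy (F ⋙ V.Q) := fun _ _ f hf =>
    Localization.inverts V.Q V _ (hF f hf)
  have h₂ : V.IsInvertedBy (G ⋙ W.Q) := fun _ _ g hg =>
    Localization.inverts W.Q W _ (hG g hg)
  have i₁ : ∀ X, IsIso ((Functor.whiskerRight adj.unit W.Q).app X) := fun X =>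
    Localization.inverts W.Q W _ (hunit X)
  have i₂ : ∀ Y, IsIso ((Functor.whiskerRight adj.counit V.Q).app Y) := fun Y =>
    Localization.inverts V.Q V _ (hcounit Y)
  have j₁ := NatIso.isIso_of_isIso_app (Functor.whiskerRight adj.unit W.Q)
  have j₂ := NatIso.isIso_of_isIso_app (Functor.whiskerRight adj.counit V.Q)
  exact
    { inverts := h₁
      isEquivalence :=
        Localization.isEquivalence W.Q W V.Q V (F ⋙ V.Q)
          (Localization.Construction.lift (F ⋙ V.Q) h₁)
          (G ⋙ W.Q) (Localization.lift (G ⋙ W.Q) h₂ V.Q)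
          (Functor.associator _ _ _ ≪≫
            Functor.isoWhiskerLeft F (Localization.fac (G ⋙ W.Q) h₂ V.Q) ≪≫
            (Functor.associator _ _ _).symm ≪≫
            (asIso (Functor.whiskerRight adj.unit W.Q)).symm ≪≫ Functor.leftUnitor _)
          (Functor.associator _ _ _ ≪≫
            Functor.isoWhiskerLeft G (Localization.Lifting.iso W.Q W (F ⋙ V.Q) _) ≪≫
            (Functor.associator _ _ _).symm ≪≫
            asIso (Functor.whiskerRight adj.counit V.Q) ≪≫ Functor.leftUnitor _) }
end

section
/- For every simplicial set X, the fully faithful functor ι_X : Δ/X → (∗⫽Δ)/X, ([n], x) ↦ ([n], n, x), sends last-vertex morphisms to cocartesian morphisms, and the induced functor on (1-categorical) localizations (Δ/X)[lv⁻¹] → ((∗⫽Δ)/X)[cc⁻¹] is an equivalence of categories. -/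
open CategoryTheory Simplicial

universe u

/-- A morphism `a : ([n], k, x) ⟶ ([m], l, y)` of `(∗⫽Δ)/X` is cocartesian if `a k = l`. -/
def cocart (X : SSet.{u}) : MorphismProperty (LaxPtOver X) :=
  fun A B a => a.map.toOrderHom A.pt = B.pt


namespace LaxPtOver

variable {X : SSet.{u}}

/-- The inclusion of the initial segment `[k] → [n]`. -/
def incl (A : LaxPtOver X) : SimplexCategory.mk A.pt.val ⟶ A.obj :=
  SimplexCategory.Hom.mk
    ⟨fun i => ⟨i.val, lt_of_lt_of_le i.isLt (Nat.succ_le_of_lt A.pt.isLt)⟩, fun _ _ h => h⟩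

/-- The restriction of a morphism to initial segments. -/
def resMap {A B : LaxPtOver X} (f : LaxPtOver.Hom A B) :
    SimplexCategory.mk A.pt.val ⟶ SimplexCategory.mk B.pt.val :=
  SimplexCategory.Hom.mk
    ⟨fun i => ⟨(f.map.toOrderHom (A.incl.toOrderHom i)).val, Nat.lt_succ_of_le
      (le_trans (f.map.toOrderHom.monotone
        (show A.incl.toOrderHom i ≤ A.pt from Nat.le_of_lt_succ i.isLt)) f.le)⟩,
     fun _ _ h => f.map.toOrderHom.monotone (A.incl.toOrderHom.monotone h)⟩

lemma resMap_incl {A B : LaxPtOver X} (f : LaxPtOver.Hom A B) :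
    resMap f ≫ B.incl = A.incl ≫ f.map := rfl

/-- The right adjoint `([n], k, x) ↦ ([k], x|[k])` of `ι_X`. -/
def res (X : SSet.{u}) : LaxPtOver X ⥤ SplxOver X where
  obj A := ⟨SimplexCategory.mk A.pt.val, X.map A.incl.op A.simplex⟩
  map := fun {A B} (f : LaxPtOver.Hom A B) => SplxOver.Hom.mk (resMap f) (by
    change X.map (resMap f).op (X.map B.incl.op B.simplex) = X.map A.incl.op A.simplex
    rw [← FunctorToTypes.map_comp_apply, ← op_comp, resMap_incl, op_comp,
      FunctorToTypes.map_comp_apply, f.fac])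
  map_id _ := rfl
  map_comp _ _ := rfl

/-- The unit. -/
def resUnit (X : SSet.{u}) : 𝟭 (SplxOver X) ⟶ iotaOver X ⋙ res X where
  app A := SplxOver.Hom.mk (SimplexCategory.Hom.mk OrderHom.id) (by
    exact (FunctorToTypes.map_comp_apply X ((iotaOver X).obj A).incl.op
      (show A.obj ⟶ SimplexCategory.mk A.obj.len from
        SimplexCategory.Hom.mk OrderHom.id).op A.simplex).symm.trans
      (FunctorToTypes.map_id_apply X A.simplex))
  naturality _ _ _ := rfl

/-- The counit. -/
def resCounit (X : SSet.{u}) : res X ⋙ iotaOver X ⟶ 𝟭 (LaxPtOver X) where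
  app A := LaxPtOver.Hom.mk A.incl (le_refl A.pt) rfl
  naturality _ _ _ := rfl

end LaxPtOver

open LaxPtOver Functor

/-- for every simplicial set `X`, the functor `ι_X : Δ/X ⥤ (∗⫽Δ)/X`,
`([n], x) ↦ ([n], n, x)`, sends last-vertex morphisms to cocartesian morphisms, and the
induced functor on localizations `(Δ/X)[lv⁻¹] ⥤ ((∗⫽Δ)/X)[cc⁻¹]` is an equivalence; i.e.
the composite of `ι_X` with the localization functor at `cc` exhibits `((∗⫽Δ)/X)[cc⁻¹]`
as the localization of `Δ/X` at `lv`. -/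
theorem iotaOver_localization_equivalence (X : SSet.{u}) :
    (∀ ⦃A B : SplxOver X⦄ (f : A ⟶ B), lastVertex X f → cocart X ((iotaOver X).map f)) ∧
      (iotaOver X ⋙ (cocart X).Q).IsLocalization (lastVertex X) := by
  have h1 : ∀ ⦃A B : SplxOver X⦄ (f : A ⟶ B), lastVertex X f →
      cocart X ((iotaOver X).map f) := fun _ _ _ hf => hf
  refine ⟨h1, ?_⟩
  have hι : (lastVertex X).IsInvertedBy (iotaOver X ⋙ (cocart X).Q) := fun _ _ f hf =>
    Localization.inverts (cocart X).Q (cocart X) _ (h1 f hf)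
  have hr : (cocart X).IsInvertedBy (res X ⋙ (lastVertex X).Q) := fun A B f hf =>
    Localization.inverts (lastVertex X).Q (lastVertex X) _ (by
      have hf' : f.map.toOrderHom A.pt = B.pt := hf
      have h2 : (f.map.toOrderHom A.pt).val = B.pt.val := congrArg Fin.val hf'
      exact Fin.ext h2)
  have : ∀ A, IsIso ((whiskerRight (resUnit X) (lastVertex X).Q).app A) := fun A =>
    Localization.inverts (lastVertex X).Q (lastVertex X) ((resUnit X).app A) rfl
  have : ∀ A, IsIso ((whiskerRight (resCounit X) (cocart X).Q).app A) := fun A =>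
    Localization.inverts (cocart X).Q (cocart X) ((resCounit X).app A) rfl
  have i1 : IsIso (whiskerRight (resUnit X) (lastVertex X).Q) := NatIso.isIso_of_isIso_app _
  have i2 : IsIso (whiskerRight (resCounit X) (cocart X).Q) := NatIso.isIso_of_isIso_app _
  exact
    { inverts := hι
      isEquivalence :=
        Localization.isEquivalence (lastVertex X).Q (lastVertex X) (cocart X).Q (cocart X)
          (iotaOver X ⋙ (cocart X).Q) (Localization.Construction.lift _ hι)
          (res X ⋙ (lastVertex X).Q) (Localization.lift (res X ⋙ (lastVertex X).Q) hr (cocart X).Q)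
          (Functor.associator _ _ _ ≪≫ isoWhiskerLeft _ (Localization.fac _ hr (cocart X).Q) ≪≫
            (Functor.associator _ _ _).symm ≪≫
            (asIso (whiskerRight (resUnit X) (lastVertex X).Q)).symm ≪≫ leftUnitor _)
          (Functor.associator _ _ _ ≪≫
            isoWhiskerLeft _ (Localization.Lifting.iso (lastVertex X).Q (lastVertex X)
              (iotaOver X ⋙ (cocart X).Q) _) ≪≫
            (Functor.associator _ _ _).symm ≪≫
            asIso (whiskerRight (resCounit X) (cocart X).Q) ≪≫ leftUnitor _) }
end

section
/- Let π : E ⥤ B be a discrete fibration, i.e. a functor such that for every object e of E and every morphism g : b → π(e) in B there exists a unique pair (e', φ : e' → e) with π(e') = b and π(φ) = g. Suppose B has an initial object b₀. Then the map sending an object e₀ of E with π(e₀) = b₀ to its connected component is a bijection from the set {objects e₀ of E with π(e₀) = b₀} (the fiber of π over b₀) to the set of connected components of E. -/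
open CategoryTheory

/-- The set of connected components of a category: the quotient of its set of objects
by the equivalence relation generated by the existence of a morphism. -/
def CatPi0 (C : Type*) [Category C] : Type _ :=
  Quot (fun a b : C => Nonempty (a ⟶ b))

/-- if `π : E ⥤ B` is a discrete fibration (every morphism `g : b ⟶ π(e)`
admits a unique lift `(e', φ : e' ⟶ e)` with `π(e') = b` and `π(φ) = g`) and `B` has an
initial object `b₀`, then sending an object of the fiber of `π` over `b₀` to its connected
component is a bijection from the fiber onto the set of connected components of `E`. -/
theorem discreteFibration_fiber_pi0_bijective
    {E B : Type*} [Category E] [Category B] (π : E ⥤ B)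
    (hπ : ∀ (e : E) (b : B) (g : b ⟶ π.obj e),
      ∃! p : Σ e' : E, e' ⟶ e,
        ∃ h : π.obj p.1 = b, π.map p.2 = eqToHom h ≫ g)
    (b₀ : B) (hb₀ : Limits.IsInitial b₀) :
    Function.Bijective (fun e₀ : {e : E // π.obj e = b₀} =>
      (Quot.mk (fun a b : E => Nonempty (a ⟶ b)) e₀.1 : CatPi0 E)) := by
  have key : ∀ e : E, ∃ p : Σ e' : E, e' ⟶ e, π.obj p.1 = b₀ ∧
      ∀ q : Σ e' : E, e' ⟶ e, π.obj q.1 = b₀ → q = p := by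
    intro e
    obtain ⟨p, ⟨h, _⟩, hu⟩ := hπ e b₀ (hb₀.to _)
    refine ⟨p, h, fun q hq => hu q ⟨hq, ?_⟩⟩
    subst hq
    exact hb₀.hom_ext _ _
  choose p hp hu using key
  have hinv : ∀ a b : E, Nonempty (a ⟶ b) → (p a).1 = (p b).1 := by
    rintro a b ⟨f⟩
    exact congrArg Sigma.fst (hu b ⟨(p a).1, (p a).2 ≫ f⟩ (hp a))
  have hfix : ∀ e : E, π.obj e = b₀ → (p e).1 = e := fun e he =>
    (congrArg Sigma.fst (hu e ⟨e, 𝟙 e⟩ he)).symm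
  constructor
  · rintro ⟨a, ha⟩ ⟨b, hb⟩ hab
    have h := congrArg (Quot.lift (fun e => (p e).1) hinv) hab
    apply Subtype.ext
    change (p a).1 = (p b).1 at h
    rwa [hfix a ha, hfix b hb] at h
  · intro x
    obtain ⟨e, rfl⟩ := Quot.exists_rep x
    exact ⟨⟨(p e).1, hp e⟩, Quot.sound ⟨(p e).2⟩⟩
end

section
/- Let X be a simplicial set, n ≥ 0, x ∈ X_n and y ∈ X₀. Let Z be the category whose objects are triples (([m], z), a, b) where ([m], z) is an object of Δ/X, a : ([n], x) → ([m], z) is any morphism of Δ/X, and b : ([0], y) → ([m], z) is a last-vertex morphism of Δ/X (i.e. the underlying map b : [0] → [m] satisfies b(0) = m and X(b)(z) = y); morphisms (([m], z), a, b) → (([m'], z'), a', b') are last-vertex morphisms w : ([m], z) → ([m'], z') with w ∘ a = a' and w ∘ b = b'. Then the map sending an element z ∈ X_{n+1} with X(d_{n+1})(z) = x and X(⟨n+1⟩)(z) = y (where d_{n+1} : [n] → [n+1] is the initial-segment inclusion and ⟨n+1⟩ : [0] → [n+1] picks the vertex n+1) to the connected component of (([n+1], z), d_{n+1}, ⟨n+1⟩)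 is a bijection from the set P_X(x, y) := {z ∈ X_{n+1} : X(d_{n+1})(z) = x and X(⟨n+1⟩)(z) = y} to the set of connected components of Z. -/
open CategoryTheory Simplicial

universe u

/-- An object of the category `Z`: a triple `(([m], z), a, b)` with `a : c ⟶ ([m], z)` an
arbitrary morphism of `Δ/X` and `b : d ⟶ ([m], z)` a last-vertex morphism. -/
structure ZObj (X : SSet.{u}) (c d : SplxOver X) where
  mid : SplxOver X
  u : c ⟶ mid
  v : d ⟶ mid
  hv : lastVertex X v

/-- A morphism of `Z`: a last-vertex morphism `w` compatible with the legs. -/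
@[ext]
structure ZHom {X : SSet.{u}} {c d : SplxOver X} (A B : ZObj X c d) where
  w : A.mid ⟶ B.mid
  hw : lastVertex X w
  hu : A.u ≫ w = B.u
  hv : A.v ≫ w = B.v

instance {X : SSet.{u}} {c d : SplxOver X} : Category (ZObj X c d) where
  Hom := ZHom
  id A := ⟨𝟙 A.mid, rfl, Category.comp_id _, Category.comp_id _⟩
  comp := fun {A B C} (f : ZHom A B) (g : ZHom B C) =>
    ⟨f.w ≫ g.w,
      by
        have hf : (f.w).map.toOrderHom (Fin.last _) = Fin.last _ := f.hw
        have hg : (g.w).map.toOrderHom (Fin.last _) = Fin.last _ := g.hw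
        show (g.w).map.toOrderHom ((f.w).map.toOrderHom (Fin.last _)) = Fin.last _
        rw [hf, hg],
      by rw [← Category.assoc, f.hu, g.hu], by rw [← Category.assoc, f.hv, g.hv]⟩
  id_comp := fun {A B} (f : ZHom A B) => by
    apply ZHom.ext; exact Category.id_comp f.w
  comp_id := fun {A B} (f : ZHom A B) => by
    apply ZHom.ext; exact Category.comp_id f.w
  assoc f g h := by
    apply ZHom.ext; exact Category.assoc _ _ _

/-- Extension of `a : [n] → [m]` to `[n+1] → [m]` by the last vertex. -/
def hatMap {n : ℕ} {M : SimplexCategory} (a : SimplexCategory.mk n ⟶ M) :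
    SimplexCategory.mk (n + 1) ⟶ M :=
  SimplexCategory.Hom.mk
    ⟨fun i : Fin (n + 2) => if h : i.1 < n + 1 then
        a.toOrderHom (⟨i.1, h⟩ : Fin (n + 1)) else Fin.last _, by
      intro i j hij
      have hij' : i.1 ≤ j.1 := hij
      dsimp only
      split_ifs with h1 h2 h2
      · exact a.toOrderHom.monotone hij'
      · exact Fin.le_last _
      · omega
      · exact le_rfl⟩

lemma hatMap_apply {n : ℕ} {M : SimplexCategory} (a : SimplexCategory.mk n ⟶ M)
    (i : Fin (n + 2)) : (hatMap a).toOrderHom i = if h : i.1 < n + 1 then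
        a.toOrderHom (⟨i.1, h⟩ : Fin (n + 1)) else Fin.last _ := rfl

lemma hatMap_last {n : ℕ} {M : SimplexCategory} (a : SimplexCategory.mk n ⟶ M) :
    (hatMap a).toOrderHom (Fin.last (n + 1)) = Fin.last _ := by
  rw [hatMap_apply, dif_neg]
  simp

lemma delta_hatMap {n : ℕ} {M : SimplexCategory} (a : SimplexCategory.mk n ⟶ M) :
    SimplexCategory.δ (Fin.last (n + 1)) ≫ hatMap a = a := by
  apply SimplexCategory.Hom.ext
  apply OrderHom.ext
  funext i
  change (hatMap a).toOrderHom ((Fin.last (n + 1)).succAbove i) = _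
  rw [Fin.succAbove_last, hatMap_apply, dif_pos (by exact i.2)]
  rfl

lemma const_hatMap {n : ℕ} {M : SimplexCategory} (a : SimplexCategory.mk n ⟶ M)
    (b : SimplexCategory.mk 0 ⟶ M) (hb : b.toOrderHom (Fin.last _) = Fin.last _) :
    SimplexCategory.const (SimplexCategory.mk 0) (SimplexCategory.mk (n + 1))
      (Fin.last (n + 1)) ≫ hatMap a = b := by
  apply SimplexCategory.Hom.ext
  apply OrderHom.ext
  funext i
  change (hatMap a).toOrderHom (Fin.last (n + 1)) = _
  have hi : i = Fin.last 0 := Subsingleton.elim (α := Fin 1) _ _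
  rw [hatMap_last, hi]
  exact hb.symm

lemma hatMap_comp {n : ℕ} {M N : SimplexCategory} (a : SimplexCategory.mk n ⟶ M)
    (w : M ⟶ N) (hw : w.toOrderHom (Fin.last _) = Fin.last _) :
    hatMap a ≫ w = hatMap (a ≫ w) := by
  apply SimplexCategory.Hom.ext
  apply OrderHom.ext
  funext i
  change w.toOrderHom ((hatMap a).toOrderHom i) = _
  rw [hatMap_apply, hatMap_apply]
  split_ifs with h
  · rfl
  · exact hw

lemma hatMap_delta {n : ℕ} :
    hatMap (SimplexCategory.δ (n := n) (Fin.last (n + 1))) = 𝟙 _ := by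
  apply SimplexCategory.Hom.ext
  apply OrderHom.ext
  funext i
  rw [hatMap_apply]
  split_ifs with h
  · change (Fin.last (n + 1)).succAbove (⟨i.1, h⟩ : Fin (n + 1)) = i
    rw [Fin.succAbove_last]
    rfl
  · change Fin.last (n + 1) = i
    apply Fin.ext
    have := i.2
    simp only [SimplexCategory.len_mk] at this
    simp only [Fin.val_last]
    omega

/-- The retraction. -/
def retr {X : SSet.{u}} {n : ℕ} {x : X.obj (Opposite.op (SimplexCategory.mk n))}
    {y : X.obj (Opposite.op (SimplexCategory.mk 0))}
    (A : ZObj X ⟨SimplexCategory.mk n, x⟩ ⟨SimplexCategory.mk 0, y⟩) :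
    X.obj (Opposite.op (SimplexCategory.mk (n + 1))) :=
  X.map (hatMap A.u.map).op A.mid.simplex

lemma retr_hom {X : SSet.{u}} {n : ℕ} {x : X.obj (Opposite.op (SimplexCategory.mk n))}
    {y : X.obj (Opposite.op (SimplexCategory.mk 0))}
    (A B : ZObj X ⟨SimplexCategory.mk n, x⟩ ⟨SimplexCategory.mk 0, y⟩) (f : ZHom A B) :
    retr A = retr B := by
  have h1 : A.u.map ≫ f.w.map = B.u.map := congrArg SplxOver.Hom.map f.hu
  unfold retr
  rw [← h1, ← hatMap_comp _ _ f.hw, op_comp, FunctorToTypes.map_comp_apply, f.w.fac]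

/-- for a simplicial set `X`, `x ∈ X_n` and `y ∈ X₀`, the map sending
`z ∈ P_X(x,y) = {z ∈ X_{n+1} : X(d_{n+1})(z) = x, X(⟨n+1⟩)(z) = y}` to the connected
component of `(([n+1], z), d_{n+1}, ⟨n+1⟩)` is a bijection onto the set of connected
components of the category `Z`. -/
theorem pXxy_bijective_pi0 (X : SSet.{u}) (n : ℕ)
    (x : X.obj (Opposite.op (SimplexCategory.mk n)))
    (y : X.obj (Opposite.op (SimplexCategory.mk 0))) :
    Function.Bijective
      (fun z : {z : X.obj (Opposite.op (SimplexCategory.mk (n + 1))) //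
          X.map (SimplexCategory.δ (Fin.last (n + 1))).op z = x ∧
          X.map (SimplexCategory.const (SimplexCategory.mk 0) (SimplexCategory.mk (n + 1))
            (Fin.last (n + 1))).op z = y} =>
        (Quot.mk _
          (⟨⟨SimplexCategory.mk (n + 1), z.1⟩,
            SplxOver.Hom.mk (SimplexCategory.δ (Fin.last (n + 1))) z.2.1,
            SplxOver.Hom.mk (SimplexCategory.const (SimplexCategory.mk 0)
              (SimplexCategory.mk (n + 1)) (Fin.last (n + 1))) z.2.2,
            rfl⟩ : ZObj X ⟨SimplexCategory.mk n, x⟩ ⟨SimplexCategory.mk 0, y⟩) :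
          CatPi0 (ZObj X ⟨SimplexCategory.mk n, x⟩ ⟨SimplexCategory.mk 0, y⟩))) := by
  constructor
  · intro z z' h
    have h2 := congrArg (Quot.lift retr (fun A B ⟨f⟩ => retr_hom A B f)) h
    apply Subtype.ext
    have key : ∀ t : X.obj (Opposite.op (SimplexCategory.mk (n + 1))),
        X.map (hatMap (SimplexCategory.δ (n := n) (Fin.last (n + 1)))).op t = t := by
      intro t
      rw [hatMap_delta, op_id, FunctorToTypes.map_id_apply]
    exact (key z.1).symm.trans (Eq.trans h2 (key z'.1))
  · intro q
    induction q using Quot.ind with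
    | mk A =>
      refine ⟨⟨retr A, ?_, ?_⟩, ?_⟩
      · unfold retr
        rw [← FunctorToTypes.map_comp_apply, ← op_comp, delta_hatMap]
        exact A.u.fac
      · unfold retr
        rw [← FunctorToTypes.map_comp_apply, ← op_comp, const_hatMap _ A.v.map A.hv]
        exact A.v.fac
      · apply Quot.sound
        exact ⟨ZHom.mk (SplxOver.Hom.mk (hatMap A.u.map) rfl) (hatMap_last _)
          (SplxOver.Hom.ext (delta_hatMap _))
          (SplxOver.Hom.ext (const_hatMap _ A.v.map A.hv))⟩
end

section
/- Let X be a strict Segal simplicial set, let x, y ∈ X₀, and let p : Δ/X → (Δ/X)[lv⁻¹] be the localization functor at the last-vertex morphisms. For f ∈ X₁ with d₁(f) = x and d₀(f) = y, consider the morphism u_f : ([0], x) → ([1], f) of Δ/X given by the map [0] → [1], 0 ↦ 0, and the last-vertex morphism v_f : ([0], y) → ([1], f) given by 0 ↦ 1. Then the map {f ∈ X₁ : d₁(f) = x, d₀(f) = y} → Hom_{(Δ/X)[lv⁻¹]}(p([0], x), p([0], y)), f ↦ p(v_f)⁻¹ ∘ p(u_f), is a bijection. -/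
open CategoryTheory Simplicial

universe u

lemma delta_zero_lastVertex :
    (SimplexCategory.δ (0 : Fin 2)).toOrderHom (Fin.last 0) = Fin.last 1 := by
  decide


namespace HLB

open SimplexCategory Opposite

variable {X : SSet.{u}}

lemma map_map {a b c : SimplexCategory} (f : a ⟶ b) (g : b ⟶ c) (s : X.obj (op c)) :
    X.map f.op (X.map g.op s) = X.map (f ≫ g).op s := by
  rw [op_comp, Functor.map_comp_apply]

/-- the edge map -/
def em {D : SimplexCategory} (i j : Fin (D.len + 1)) (h : i ≤ j) : ⦋1⦌ ⟶ D :=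
  mkOfLe (n := D.len) i j h

/-- vertex of a simplex -/
def vx {D : SimplexCategory} (s : X.obj (op D)) (i : Fin (D.len + 1)) : X.obj (op ⦋0⦌) :=
  X.map (const ⦋0⦌ D i).op s

/-- edge of a simplex -/
def ed {D : SimplexCategory} (s : X.obj (op D)) (i j : Fin (D.len + 1)) (h : i ≤ j) :
    X.obj (op ⦋1⦌) :=
  X.map (em i j h).op s

lemma d_em_src {D : SimplexCategory} (i j : Fin (D.len + 1)) (h : i ≤ j) :
    SimplexCategory.δ (1 : Fin 2) ≫ em i j h = const ⦋0⦌ D i :=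
  Hom.ext_zero_left _ _

lemma d_em_tgt {D : SimplexCategory} (i j : Fin (D.len + 1)) (h : i ≤ j) :
    SimplexCategory.δ (0 : Fin 2) ≫ em i j h = const ⦋0⦌ D j :=
  Hom.ext_zero_left _ _

lemma em_comp {D E : SimplexCategory} (i j : Fin (D.len + 1)) (h : i ≤ j) (a : D ⟶ E) :
    em i j h ≫ a = em (a.toOrderHom i) (a.toOrderHom j) (a.toOrderHom.monotone h) :=
  Hom.ext_one_left _ _

lemma em_refl {D : SimplexCategory} (i : Fin (D.len + 1)) :
    em i i le_rfl = SimplexCategory.σ (0 : Fin 1) ≫ const ⦋0⦌ D i :=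
  Hom.ext_one_left _ _

lemma ed_src {D : SimplexCategory} (s : X.obj (op D)) (i j : Fin (D.len + 1)) (h : i ≤ j) :
    X.map (SimplexCategory.δ (1 : Fin 2)).op (ed s i j h) = vx s i := by
  rw [ed, vx, map_map, d_em_src]

lemma ed_tgt {D : SimplexCategory} (s : X.obj (op D)) (i j : Fin (D.len + 1)) (h : i ≤ j) :
    X.map (SimplexCategory.δ (0 : Fin 2)).op (ed s i j h) = vx s j := by
  rw [ed, vx, map_map, d_em_tgt]

lemma ed_map {D E : SimplexCategory} (a : D ⟶ E) (s : X.obj (op E))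
    (i j : Fin (D.len + 1)) (h : i ≤ j) :
    ed (X.map a.op s) i j h =
      ed s (a.toOrderHom i) (a.toOrderHom j) (a.toOrderHom.monotone h) := by
  rw [ed, ed, map_map, em_comp]

lemma vx_map {D E : SimplexCategory} (a : D ⟶ E) (s : X.obj (op E)) (i : Fin (D.len + 1)) :
    vx (X.map a.op s) i = vx s (a.toOrderHom i) := by
  rw [vx, vx, map_map, const_comp]

lemma ed_refl {D : SimplexCategory} (s : X.obj (op D)) (i : Fin (D.len + 1)) :
    ed s i i le_rfl = X.map (SimplexCategory.σ (0 : Fin 1)).op (vx s i) := by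
  rw [ed, vx, map_map, em_refl]

lemma ed_one (f : X.obj (op ⦋1⦌)) (h : (0 : Fin 2) ≤ 1) : ed (D := ⦋1⦌) f 0 1 h = f := by
  have : em (D := ⦋1⦌) (0 : Fin 2) 1 h = 𝟙 _ := Hom.ext_one_left _ _
  rw [ed, this, op_id, Functor.map_id_apply]

lemma vx_zero (x : X.obj (op ⦋0⦌)) (i : Fin 1) : vx (D := ⦋0⦌) x i = x := by
  have : const ⦋0⦌ ⦋0⦌ i = 𝟙 _ := Subsingleton.elim _ _
  rw [vx, this, op_id, Functor.map_id_apply]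

/-- composition relation -/
def Tri (f g h : X.obj (op ⦋1⦌)) : Prop :=
  ∃ s : X.obj (op ⦋2⦌), ed (D := ⦋2⦌) s (0 : Fin 3) (1 : Fin 3) (by decide) = f ∧
    ed (D := ⦋2⦌) s (1 : Fin 3) (2 : Fin 3) (by decide) = g ∧
    ed (D := ⦋2⦌) s (0 : Fin 3) (2 : Fin 3) (by decide) = h

lemma tri_ed {D : SimplexCategory} (s : X.obj (op D)) (i j k : Fin (D.len + 1)) (h : i ≤ j)
    (h' : j ≤ k) : Tri (ed s i j h) (ed s j k h') (ed s i k (h.trans h')) := by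
  refine ⟨X.map (mkOfLeComp (n := D.len) i j k h h').op s, ?_, ?_, ?_⟩ <;>
  · erw [ed_map]; rfl

lemma succ_em {n : ℕ} (i : Fin n) :
    mkOfSucc i = em (D := ⦋n⦌) i.castSucc i.succ (Fin.castSucc_le_succ i) :=
  Hom.ext_one_left _ _

variable (hX : ∀ m : ℕ, Function.Bijective (X.spine m))

include hX in
lemma tri_unique {f g h h' : X.obj (op ⦋1⦌)} (t : Tri f g h) (t' : Tri f g h') : h = h' := by
  obtain ⟨s, h1, h2, h3⟩ := t
  obtain ⟨s', h1', h2', h3'⟩ := t'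
  have : s = s' := by
    apply (hX 2).1
    apply SSet.Path.ext'
    intro i
    rw [SSet.spine_arrow, SSet.spine_arrow, succ_em]
    fin_cases i
    · exact h1.trans h1'.symm
    · exact h2.trans h2'.symm
  rw [← h3, ← h3', this]

include hX in
lemma tri_exists (f g : X.obj (op ⦋1⦌))
    (e : X.map (SimplexCategory.δ (0 : Fin 2)).op f = X.map (SimplexCategory.δ (1 : Fin 2)).op g) :
    ∃ h, Tri f g h := by
  let p : X.Path 2 :=
    { vertex := ![X.map (SimplexCategory.δ (1 : Fin 2)).op f,
        X.map (SimplexCategory.δ (1 : Fin 2)).op g, X.map (SimplexCategory.δ (0 : Fin 2)).op g]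
      arrow := ![f, g]
      arrow_src := by intro i; fin_cases i <;> rfl
      arrow_tgt := by
        intro i; fin_cases i
        · exact e
        · rfl }
  obtain ⟨s, hs⟩ := (hX 2).2 p
  refine ⟨_, s, ?_, ?_, rfl⟩
  · have := SSet.Path.congr_arrow hs 0
    rw [SSet.spine_arrow, succ_em] at this
    exact this
  · have := SSet.Path.congr_arrow hs 1
    rw [SSet.spine_arrow, succ_em] at this
    exact this

include hX in
lemma exists3 (f g k : X.obj (op ⦋1⦌))
    (e : X.map (SimplexCategory.δ (0 : Fin 2)).op f = X.map (SimplexCategory.δ (1 : Fin 2)).op g)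
    (e' : X.map (SimplexCategory.δ (0 : Fin 2)).op g =
      X.map (SimplexCategory.δ (1 : Fin 2)).op k) :
    ∃ s : X.obj (op ⦋3⦌), ed (D := ⦋3⦌) s (0 : Fin 4) (1 : Fin 4) (by decide) = f ∧
    ed (D := ⦋3⦌) s (1 : Fin 4) (2 : Fin 4) (by decide) = g ∧
    ed (D := ⦋3⦌) s (2 : Fin 4) (3 : Fin 4) (by decide) = k := by
  let p : X.Path 3 :=
    { vertex := ![X.map (SimplexCategory.δ (1 : Fin 2)).op f,
        X.map (SimplexCategory.δ (1 : Fin 2)).op g, X.map (SimplexCategory.δ (1 : Fin 2)).op k,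
        X.map (SimplexCategory.δ (0 : Fin 2)).op k]
      arrow := ![f, g, k]
      arrow_src := by intro i; fin_cases i <;> rfl
      arrow_tgt := by
        intro i; fin_cases i
        · exact e
        · exact e'
        · rfl }
  obtain ⟨s, hs⟩ := (hX 3).2 p
  refine ⟨s, ?_, ?_, ?_⟩
  · have := SSet.Path.congr_arrow hs 0
    rw [SSet.spine_arrow, succ_em] at this
    exact this
  · have := SSet.Path.congr_arrow hs 1
    rw [SSet.spine_arrow, succ_em] at this
    exact this
  · have := SSet.Path.congr_arrow hs 2
    rw [SSet.spine_arrow, succ_em] at this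
    exact this

lemma tri_src {f g h : X.obj (op ⦋1⦌)} (t : Tri f g h) :
    X.map (SimplexCategory.δ (1 : Fin 2)).op h = X.map (SimplexCategory.δ (1 : Fin 2)).op f := by
  obtain ⟨s, rfl, rfl, rfl⟩ := t
  rw [ed_src, ed_src]

lemma tri_tgt {f g h : X.obj (op ⦋1⦌)} (t : Tri f g h) :
    X.map (SimplexCategory.δ (0 : Fin 2)).op h = X.map (SimplexCategory.δ (0 : Fin 2)).op g := by
  obtain ⟨s, rfl, rfl, rfl⟩ := t
  rw [ed_tgt, ed_tgt]

lemma tri_mid {f g h : X.obj (op ⦋1⦌)} (t : Tri f g h) :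
    X.map (SimplexCategory.δ (0 : Fin 2)).op f = X.map (SimplexCategory.δ (1 : Fin 2)).op g := by
  obtain ⟨s, rfl, rfl, rfl⟩ := t
  rw [ed_tgt, ed_src]

include hX in
lemma tri_assoc {f g k fg gk r : X.obj (op ⦋1⦌)} (t1 : Tri f g fg) (t2 : Tri g k gk)
    (t3 : Tri fg k r) : Tri f gk r := by
  obtain ⟨s, h1, h2, h3⟩ := exists3 hX f g k (tri_mid t1) (tri_mid t2)
  have a1 := tri_ed (D := ⦋3⦌) s (0 : Fin 4) (1 : Fin 4) (2 : Fin 4) (by decide) (by decide)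
  have a2 := tri_ed (D := ⦋3⦌) s (1 : Fin 4) (2 : Fin 4) (3 : Fin 4) (by decide) (by decide)
  have a3 := tri_ed (D := ⦋3⦌) s (0 : Fin 4) (2 : Fin 4) (3 : Fin 4) (by decide) (by decide)
  have a4 := tri_ed (D := ⦋3⦌) s (0 : Fin 4) (1 : Fin 4) (3 : Fin 4) (by decide) (by decide)
  rw [h1, h2] at a1
  rw [h2, h3] at a2
  rw [tri_unique hX a1 t1, h3] at a3
  rw [h1, tri_unique hX a2 t2, tri_unique hX a3 t3] at a4
  exact a4

lemma tri_id_right (f : X.obj (op ⦋1⦌)) :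
    Tri f (X.map (SimplexCategory.σ (0 : Fin 1)).op (X.map (SimplexCategory.δ (0 : Fin 2)).op f))
      f := by
  have := tri_ed (D := ⦋1⦌) f (0 : Fin 2) (1 : Fin 2) (1 : Fin 2) (by decide) (by decide)
  rw [ed_refl, ed_one, ← ed_tgt (D := ⦋1⦌) f (0 : Fin 2) (1 : Fin 2) (by decide), ed_one] at this
  exact this

lemma tri_id_left (f : X.obj (op ⦋1⦌)) :
    Tri (X.map (SimplexCategory.σ (0 : Fin 1)).op (X.map (SimplexCategory.δ (1 : Fin 2)).op f)) f
      f := by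
  have := tri_ed (D := ⦋1⦌) f (0 : Fin 2) (0 : Fin 2) (1 : Fin 2) (by decide) (by decide)
  rw [ed_refl, ed_one, ← ed_src (D := ⦋1⦌) f (0 : Fin 2) (1 : Fin 2) (by decide), ed_one] at this
  exact this

/-- edges with given ends -/
abbrev EHom (x y : X.obj (op ⦋0⦌)) : Type u :=
  {f : X.obj (op ⦋1⦌) // X.map (SimplexCategory.δ (1 : Fin 2)).op f = x ∧
    X.map (SimplexCategory.δ (0 : Fin 2)).op f = y}

/-- the category associated with `X` -/
structure Ob (X : SSet.{u}) (hX : ∀ m : ℕ, Function.Bijective (X.spine m)) where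
  v : X.obj (op ⦋0⦌)

/-- degenerate edge -/
def idE (x : X.obj (op ⦋0⦌)) : EHom x x :=
  ⟨X.map (SimplexCategory.σ (0 : Fin 1)).op x, by
    constructor
    · rw [map_map, Subsingleton.elim (_ ≫ _) (𝟙 _), op_id, Functor.map_id_apply]
    · rw [map_map, Subsingleton.elim (_ ≫ _) (𝟙 _), op_id, Functor.map_id_apply]⟩

/-- composite edge -/
noncomputable def compE (hX : ∀ m : ℕ, Function.Bijective (X.spine m))
    {x y z : X.obj (op ⦋0⦌)} (f : EHom x y) (g : EHom y z) : EHom x z :=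
  ⟨(tri_exists hX f.1 g.1 (f.2.2.trans g.2.1.symm)).choose, by
    have t := (tri_exists hX f.1 g.1 (f.2.2.trans g.2.1.symm)).choose_spec
    exact ⟨(tri_src t).trans f.2.1, (tri_tgt t).trans g.2.2⟩⟩

lemma compE_tri {x y z : X.obj (op ⦋0⦌)} (f : EHom x y) (g : EHom y z) :
    Tri f.1 g.1 (compE hX f g).1 :=
  (tri_exists hX f.1 g.1 (f.2.2.trans g.2.1.symm)).choose_spec

lemma compE_eq {x y z : X.obj (op ⦋0⦌)} {f : EHom x y} {g : EHom y z} {h : EHom x z}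
    (t : Tri f.1 g.1 h.1) : compE hX f g = h :=
  Subtype.ext (tri_unique hX (compE_tri hX f g) t)

lemma idE_tri_right {x y : X.obj (op ⦋0⦌)} (f : EHom x y) : Tri f.1 (idE y).1 f.1 := by
  have := tri_id_right f.1
  rw [f.2.2] at this
  exact this

lemma idE_tri_left {x y : X.obj (op ⦋0⦌)} (f : EHom x y) : Tri (idE x).1 f.1 f.1 := by
  have := tri_id_left f.1
  rw [f.2.1] at this
  exact this

noncomputable instance : Category (Ob X hX) where
  Hom a b := EHom a.v b.v
  id a := idE a.v
  comp f g := compE hX f g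
  id_comp f := compE_eq hX (idE_tri_left f)
  comp_id f := compE_eq hX (idE_tri_right f)
  assoc f g h := (compE_eq hX (tri_assoc hX (compE_tri hX f g) (compE_tri hX g h)
    (compE_tri hX (compE hX f g) h))).symm

lemma comp_tri {a b c : Ob X hX} (f : a ⟶ b) (g : b ⟶ c) : Tri f.1 g.1 (f ≫ g).1 :=
  compE_tri hX f g

lemma comp_eq {a b c : Ob X hX} {f : a ⟶ b} {g : b ⟶ c} {h : a ⟶ c}
    (t : Tri f.1 g.1 h.1) : f ≫ g = h :=
  compE_eq hX t

/-- edge of a simplex as a hom -/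
def edE {D : SimplexCategory} (s : X.obj (op D)) (i j : Fin (D.len + 1)) (h : i ≤ j) :
    EHom (vx s i) (vx s j) := ⟨ed s i j h, ed_src s i j h, ed_tgt s i j h⟩

lemma fac_vx {A B : SplxOver X} (a : A ⟶ B) (i : Fin (A.obj.len + 1)) :
    vx A.simplex i = vx B.simplex (a.map.toOrderHom i) := by
  rw [← a.fac, vx_map]

lemma fac_ed {A B : SplxOver X} (a : A ⟶ B) (i j : Fin (A.obj.len + 1)) (h : i ≤ j) :
    ed A.simplex i j h = ed B.simplex (a.map.toOrderHom i) (a.map.toOrderHom j)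
      (a.map.toOrderHom.monotone h) := by
  rw [← ed_map a.map, a.fac]

/-- The last vertex functor -/
noncomputable def LV : SplxOver X ⥤ Ob X hX where
  obj A := ⟨vx A.simplex (Fin.last _)⟩
  map {A B} a := ⟨ed B.simplex (a.map.toOrderHom (Fin.last _)) (Fin.last _) (Fin.le_last _),
    (ed_src _ _ _ _).trans (fac_vx a _).symm, ed_tgt _ _ _ _⟩
  map_id A := Subtype.ext (ed_refl A.simplex (Fin.last _))
  map_comp {A B C} a b := by
    symm
    apply comp_eq
    change Tri (ed B.simplex _ _ _) (ed C.simplex _ _ _) (ed C.simplex _ _ _)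
    rw [fac_ed b]
    exact tri_ed C.simplex (b.map.toOrderHom (a.map.toOrderHom (Fin.last _)))
      (b.map.toOrderHom (Fin.last _)) (Fin.last _) _ _

lemma isIso_of_val {a b : Ob X hX} (f : a ⟶ b) (hf : f.1 = (idE b.v).1) : IsIso f := by
  obtain ⟨a⟩ := a
  obtain ⟨b⟩ := b
  have e : a = b := by
    exact (f.2.1.symm.trans (congrArg _ hf)).trans (idE b).2.1
  subst e
  have : f = 𝟙 _ := Subtype.ext hf
  rw [this]
  infer_instance

lemma LV_val_of_lv {A B : SplxOver X} (a : A ⟶ B) (ha : lastVertex X a) :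
    ((LV hX).map a).1 = (idE ((LV hX).obj B).v).1 := by
  have ha : a.map.toOrderHom (Fin.last _) = Fin.last _ := ha
  change ed B.simplex _ _ _ = X.map _ (vx B.simplex (Fin.last _))
  rw [← ed_refl]
  congr 1

lemma LV_inverts : (lastVertex X).IsInvertedBy (LV hX) := fun _ _ a ha =>
  isIso_of_val hX _ (LV_val_of_lv hX a ha)

/-- vertex object -/
abbrev pt (x : X.obj (op ⦋0⦌)) : SplxOver X := ⟨⦋0⦌, x⟩

/-- edge object -/
abbrev edg (f : X.obj (op ⦋1⦌)) : SplxOver X := ⟨⦋1⦌, f⟩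

/-- source inclusion -/
abbrev uu {x y : X.obj (op ⦋0⦌)} (f : EHom x y) : pt x ⟶ edg f.1 :=
  SplxOver.Hom.mk (SimplexCategory.δ (1 : Fin 2)) f.2.1

/-- target inclusion -/
abbrev vv {x y : X.obj (op ⦋0⦌)} (f : EHom x y) : pt y ⟶ edg f.1 :=
  SplxOver.Hom.mk (SimplexCategory.δ (0 : Fin 2)) f.2.2

lemma vv_lv {x y : X.obj (op ⦋0⦌)} (f : EHom x y) : lastVertex X (vv f) := delta_zero_lastVertex

/-- the fraction -/
noncomputable def frac {x y : X.obj (op ⦋0⦌)} (f : EHom x y) :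
    (lastVertex X).Q.obj (pt x) ⟶ (lastVertex X).Q.obj (pt y) :=
  (lastVertex X).Q.map (uu f) ≫
    (Localization.isoOfHom (lastVertex X).Q (lastVertex X) (vv f) (vv_lv f)).inv

lemma frac_vv {x y : X.obj (op ⦋0⦌)} (f : EHom x y) :
    frac f ≫ (lastVertex X).Q.map (vv f) = (lastVertex X).Q.map (uu f) := by
  rw [frac, Category.assoc]
  erw [Localization.isoOfHom_inv_hom_id]
  rw [Category.comp_id]

lemma hom_ext' {A B : SplxOver X} {a b : A ⟶ B} (h : a.map = b.map) : a = b :=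
  SplxOver.Hom.ext h

lemma frac_comp {x y : X.obj (op ⦋0⦌)} (f : EHom x y) {A : SplxOver X} (a : pt x ⟶ A)
    (b : pt y ⟶ A) (m : edg f.1 ⟶ A) (h : SimplexCategory.δ (1 : Fin 2) ≫ m.map = a.map)
    (h' : SimplexCategory.δ (0 : Fin 2) ≫ m.map = b.map) :
    frac f ≫ (lastVertex X).Q.map b = (lastVertex X).Q.map a := by
  have e1 : uu f ≫ m = a := hom_ext' h
  have e2 : vv f ≫ m = b := hom_ext' h'
  rw [← e1, ← e2, Functor.map_comp, Functor.map_comp, ← Category.assoc, frac_vv]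

lemma isIso_Q {A B : SplxOver X} (a : A ⟶ B) (ha : lastVertex X a) :
    IsIso ((lastVertex X).Q.map a) :=
  Localization.inverts (lastVertex X).Q (lastVertex X) a ha

/-- vertex inclusion -/
def vin (A : SplxOver X) (i : Fin (A.obj.len + 1)) : pt (vx A.simplex i) ⟶ A :=
  SplxOver.Hom.mk (const ⦋0⦌ A.obj i) rfl

lemma vin_lv (A : SplxOver X) : lastVertex X (vin A (Fin.last _)) := rfl

/-- The functor back -/
noncomputable def GG : Ob X hX ⥤ (lastVertex X).Localization where
  obj a := (lastVertex X).Q.obj (pt a.v)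
  map {a b} f := frac f
  map_id a := by
    have := frac_comp (idE a.v) (𝟙 (pt a.v)) (𝟙 (pt a.v))
      (SplxOver.Hom.mk (SimplexCategory.σ (0 : Fin 1)) rfl)
      (Subsingleton.elim _ _) (Subsingleton.elim _ _)
    rw [CategoryTheory.Functor.map_id, Category.comp_id] at this
    exact this
  map_comp {a b c} f g := by
    obtain ⟨s, h1, h2, h3⟩ := comp_tri hX f g
    let A : SplxOver X := ⟨⦋2⦌, s⟩
    have e0 : X.map (const ⦋0⦌ ⦋2⦌ (0 : Fin 3)).op s = a.v := by
      rw [← f.2.1, ← h1, ed_src]; rfl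
    have e1 : X.map (const ⦋0⦌ ⦋2⦌ (1 : Fin 3)).op s = b.v := by
      rw [← g.2.1, ← h2, ed_src]; rfl
    have e2 : X.map (const ⦋0⦌ ⦋2⦌ (2 : Fin 3)).op s = c.v := by
      rw [← g.2.2, ← h2, ed_tgt]; rfl
    let i0 : pt a.v ⟶ A := SplxOver.Hom.mk _ e0
    let i1 : pt b.v ⟶ A := SplxOver.Hom.mk _ e1
    let i2 : pt c.v ⟶ A := SplxOver.Hom.mk _ e2
    have k1 := frac_comp f i0 i1 (SplxOver.Hom.mk (em (D := ⦋2⦌) (0 : Fin 3) (1 : Fin 3) (by decide)) h1)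
      (d_em_src (D := ⦋2⦌) (0 : Fin 3) (1 : Fin 3) (by decide))
      (d_em_tgt (D := ⦋2⦌) (0 : Fin 3) (1 : Fin 3) (by decide))
    have k2 := frac_comp g i1 i2 (SplxOver.Hom.mk (em (D := ⦋2⦌) (1 : Fin 3) (2 : Fin 3) (by decide)) h2)
      (d_em_src (D := ⦋2⦌) (1 : Fin 3) (2 : Fin 3) (by decide))
      (d_em_tgt (D := ⦋2⦌) (1 : Fin 3) (2 : Fin 3) (by decide))
    have k3 := frac_comp (f ≫ g) i0 i2 (SplxOver.Hom.mk (em (D := ⦋2⦌) (0 : Fin 3) (2 : Fin 3) (by decide)) h3)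
      (d_em_src (D := ⦋2⦌) (0 : Fin 3) (2 : Fin 3) (by decide))
      (d_em_tgt (D := ⦋2⦌) (0 : Fin 3) (2 : Fin 3) (by decide))
    have := isIso_Q i2 rfl
    rw [← cancel_mono ((lastVertex X).Q.map i2), k3, Category.assoc, k2, k1]

/-- comparison -/
noncomputable def tt : LV hX ⋙ GG hX ⟶ (lastVertex X).Q where
  app A := (lastVertex X).Q.map (vin A (Fin.last _))
  naturality A B a := by
    refine Eq.trans ?_ ((lastVertex X).Q.map_comp (vin A (Fin.last _)) a)
    exact frac_comp ((LV hX).map a) (vin A (Fin.last _) ≫ a) (vin B (Fin.last _))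
      (SplxOver.Hom.mk (em _ _ (Fin.le_last _)) rfl)
      (d_em_src _ _ (Fin.le_last _)) (d_em_tgt _ _ (Fin.le_last _))

/-- transport of a morphism of the localization to an edge -/
noncomputable def WW {A B : SplxOver X}
    (h : (lastVertex X).Q.obj A ⟶ (lastVertex X).Q.obj B) : (LV hX).obj A ⟶ (LV hX).obj B :=
  (Localization.fac (LV hX) (LV_inverts hX) (lastVertex X).Q).inv.app A ≫
    (Localization.lift (LV hX) (LV_inverts hX) (lastVertex X).Q).map h ≫
    (Localization.fac (LV hX) (LV_inverts hX) (lastVertex X).Q).hom.app B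

lemma WW_comp {A B C : SplxOver X}
    (h : (lastVertex X).Q.obj A ⟶ (lastVertex X).Q.obj B)
    (k : (lastVertex X).Q.obj B ⟶ (lastVertex X).Q.obj C) :
    WW hX (h ≫ k) = WW hX h ≫ WW hX k := by
  simp [WW]

lemma WW_Q {A B : SplxOver X} (a : A ⟶ B) :
    WW hX ((lastVertex X).Q.map a) = (LV hX).map a := by
  have := (Localization.fac (LV hX) (LV_inverts hX) (lastVertex X).Q).hom.naturality a
  rw [WW, ← Functor.comp_map, this, Iso.inv_hom_id_app_assoc]

lemma WW_frac {x y : X.obj (op ⦋0⦌)} (f : EHom x y) : (WW hX (frac f)).1 = f.1 := by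
  have h := congrArg (WW hX) (frac_vv f)
  rw [WW_comp, WW_Q, WW_Q] at h
  have t := comp_tri hX (WW hX (frac f)) ((LV hX).map (vv f))
  rw [h, LV_val_of_lv hX _ (vv_lv f)] at t
  have e : ((LV hX).obj (pt y)).v = ((LV hX).obj (edg f.1)).v := by
    have := ((LV hX).map (vv f)).2.1
    rw [LV_val_of_lv hX _ (vv_lv f), (idE _).2.1] at this
    exact this.symm
  have t' := idE_tri_right (WW hX (frac f))
  have e' : (idE ((LV hX).obj (pt y)).v).1 = (idE ((LV hX).obj (edg f.1)).v).1 := by rw [e]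
  rw [e'] at t'
  rw [tri_unique hX t' t]
  exact ed_one f.1 _

lemma WW_GG {A B : SplxOver X} (h : (lastVertex X).Q.obj A ⟶ (lastVertex X).Q.obj B) :
    (GG hX).map (WW hX h) ≫ (tt hX).app B = (tt hX).app A ≫ h := by
  let F := Localization.lift (LV hX) (LV_inverts hX) (lastVertex X).Q
  let e : (lastVertex X).Q ⋙ F ≅ LV hX :=
    Localization.fac (LV hX) (LV_inverts hX) (lastVertex X).Q
  let τ : (lastVertex X).Q ⋙ (F ⋙ GG hX) ⟶ (lastVertex X).Q ⋙ 𝟭 _ :=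
    Functor.whiskerRight e.hom (GG hX) ≫ tt hX
  let θ : F ⋙ GG hX ⟶ 𝟭 _ :=
    (Localization.fullyFaithfulWhiskeringLeft (lastVertex X).Q (lastVertex X) _).preimage τ
  have hθ (A : SplxOver X) : θ.app ((lastVertex X).Q.obj A) =
      (GG hX).map (e.hom.app A) ≫ (tt hX).app A :=
    NatTrans.congr_app
    ((Localization.fullyFaithfulWhiskeringLeft (lastVertex X).Q (lastVertex X) _).map_preimage τ) A
  have n := θ.naturality h
  rw [hθ, hθ] at n
  have n' : (GG hX).map (F.map h) ≫ (GG hX).map (e.hom.app B) ≫ (tt hX).app B =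
    ((GG hX).map (e.hom.app A) ≫ (tt hX).app A) ≫ h := n
  have hW : WW hX h = e.inv.app A ≫ F.map h ≫ e.hom.app B := rfl
  have h1 : (GG hX).map (e.inv.app A) ≫ (GG hX).map (e.hom.app A) = 𝟙 _ := by
    rw [← CategoryTheory.Functor.map_comp, Iso.inv_hom_id_app, CategoryTheory.Functor.map_id]
  calc (GG hX).map (WW hX h) ≫ (tt hX).app B
      = (GG hX).map (e.inv.app A) ≫ (GG hX).map (F.map h) ≫ (GG hX).map (e.hom.app B) ≫
          (tt hX).app B := by
        rw [hW, CategoryTheory.Functor.map_comp, CategoryTheory.Functor.map_comp]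
        exact (Category.assoc _ _ _).trans (congrArg _ (Category.assoc _ _ _))
    _ = (GG hX).map (e.inv.app A) ≫ ((GG hX).map (e.hom.app A) ≫ (tt hX).app A) ≫ h :=
        congrArg _ n'
    _ = ((GG hX).map (e.inv.app A) ≫ (GG hX).map (e.hom.app A)) ≫ (tt hX).app A ≫ h :=
        (congrArg _ (Category.assoc _ _ _)).trans (Category.assoc _ _ _).symm
    _ = 𝟙 _ ≫ (tt hX).app A ≫ h := congrArg (· ≫ _) h1
    _ = (tt hX).app A ≫ h := Category.id_comp _

lemma frac_transport {x y x' y' : X.obj (op ⦋0⦌)} (f : EHom x y) (g : EHom x' y')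
    (e : f.1 = g.1) (a : pt x' ⟶ pt x) (b : pt y' ⟶ pt y) :
    (lastVertex X).Q.map a ≫ frac f = frac g ≫ (lastVertex X).Q.map b := by
  have := isIso_Q _ (vv_lv f)
  let m : edg g.1 ⟶ edg f.1 := SplxOver.Hom.mk (𝟙 _) (by
    change X.map (𝟙 _) f.1 = g.1
    rw [Functor.map_id_apply, e])
  have k := frac_comp g (a ≫ uu f) (b ≫ vv f) m (Hom.ext_zero_left _ _ (by
      change _ = (SimplexCategory.δ (1 : Fin 2)).toOrderHom (a.map.toOrderHom 0)
      rw [Subsingleton.elim (α := Fin 1) (a.map.toOrderHom 0) 0]; rfl)) (Hom.ext_zero_left _ _ (by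
      change _ = (SimplexCategory.δ (0 : Fin 2)).toOrderHom (b.map.toOrderHom 0)
      rw [Subsingleton.elim (α := Fin 1) (b.map.toOrderHom 0) 0]; rfl))
  rw [← cancel_mono ((lastVertex X).Q.map (vv f)), Category.assoc, frac_vv, Category.assoc,
    ← CategoryTheory.Functor.map_comp, ← CategoryTheory.Functor.map_comp, k]

include hX in
lemma frac_surj {x y : X.obj (op ⦋0⦌)}
    (h : (lastVertex X).Q.obj (pt x) ⟶ (lastVertex X).Q.obj (pt y)) :
    ∃ f : EHom x y, frac f = h := by
  let f : EHom x y := ⟨(WW hX h).1, (WW hX h).2.1.trans (vx_zero x _),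
    (WW hX h).2.2.trans (vx_zero y _)⟩
  refine ⟨f, ?_⟩
  have k := (frac_transport f (WW hX h) rfl (vin (pt x) (Fin.last _)) (vin (pt y) (Fin.last _))).trans
    (WW_GG hX h)
  have := isIso_Q _ (vin_lv (pt x))
  exact (cancel_epi ((lastVertex X).Q.map (vin (pt x) (Fin.last _)))).1 k

end HLB

/-- for a strict Segal simplicial set `X` and `x, y ∈ X₀`, the map sending
`f ∈ X₁` with `d₁(f) = x`, `d₀(f) = y` to `p(v_f)⁻¹ ∘ p(u_f)` is a bijection onto
`Hom_{(Δ/X)[lv⁻¹]}(p([0], x), p([0], y))`, where `u_f : ([0], x) ⟶ ([1], f)` is given by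
`0 ↦ 0` and the last-vertex morphism `v_f : ([0], y) ⟶ ([1], f)` by `0 ↦ 1`. -/
theorem hom_in_localization_bijective (X : SSet.{u})
    (hX : ∀ m : ℕ, Function.Bijective (X.spine m))
    (x y : X.obj (Opposite.op (SimplexCategory.mk 0))) :
    Function.Bijective
      (fun f : {f : X.obj (Opposite.op (SimplexCategory.mk 1)) //
          X.map (SimplexCategory.δ (1 : Fin 2)).op f = x ∧
          X.map (SimplexCategory.δ (0 : Fin 2)).op f = y} =>
        ((lastVertex X).Q.map
            (SplxOver.Hom.mk (SimplexCategory.δ (1 : Fin 2)) f.2.1 :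
              (⟨SimplexCategory.mk 0, x⟩ : SplxOver X) ⟶ ⟨SimplexCategory.mk 1, f.1⟩) ≫
          (Localization.isoOfHom (lastVertex X).Q (lastVertex X)
            (SplxOver.Hom.mk (SimplexCategory.δ (0 : Fin 2)) f.2.2 :
              (⟨SimplexCategory.mk 0, y⟩ : SplxOver X) ⟶ ⟨SimplexCategory.mk 1, f.1⟩)
            delta_zero_lastVertex).inv :
          (lastVertex X).Q.obj ⟨SimplexCategory.mk 0, x⟩ ⟶
            (lastVertex X).Q.obj ⟨SimplexCategory.mk 0, y⟩)) := by
  refine ⟨fun f g h => ?_, fun h => ?_⟩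
  · have h : HLB.frac f = HLB.frac g := h
    apply Subtype.ext
    rw [← HLB.WW_frac hX f, h, HLB.WW_frac hX g]
  · exact HLB.frac_surj hX h
end

section
/- For every small category C, the last-vertex functor L : Δ/N(C) → C, sending an object ([n], σ) (with σ : [n] → C a functor) to the object σ(n) and a morphism a : ([n], σ) → ([m], τ) to the morphism τ(a(n) ≤ m) : σ(n) → τ(m) (the image under τ of the unique morphism a(n) → m in [m]), exhibits C as the localization of Δ/N(C) at the class of last-vertex morphisms; i.e. L satisfies Functor.IsLocalization with respect to lv. -/
open CategoryTheory Simplicial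

universe u

universe w v'

/-- For a morphism `f : ([n], σ) ⟶ ([m], τ)` in the category of simplices of the nerve of
a category `C`, the object `σ(n)` equals `τ(a(n))`. -/
lemma nerve_simplex_obj_eq {C : Type w} [Category.{v'} C]
    {A B : SplxOver (nerve C)} (f : A ⟶ B) :
    A.simplex.obj (Fin.last A.obj.len) =
      B.simplex.obj (f.map.toOrderHom (Fin.last A.obj.len)) := by
  rw [← f.fac]
  rfl

namespace LVLoc

variable {C : Type w} [Category.{v'} C]

/-- The last vertex functor. -/
def L (C : Type w) [Category.{v'} C] : SplxOver (nerve C) ⥤ C where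
  obj A := A.simplex.obj (Fin.last A.obj.len)
  map {A B} f := eqToHom (nerve_simplex_obj_eq f) ≫ B.simplex.map (homOfLE (Fin.le_last _))
  map_id A := by
    exact (Category.id_comp _).trans (A.simplex.map_id _)
  map_comp {A B D} f g := by
    obtain ⟨a, σ⟩ := A
    obtain ⟨b, τ⟩ := B
    obtain ⟨d, υ⟩ := D
    obtain ⟨f, hf⟩ := f
    obtain ⟨g, hg⟩ := g
    change a ⟶ b at f
    change b ⟶ d at g
    change (nerve C).map f.op τ = σ at hf
    change (nerve C).map g.op υ = τ at hg
    subst hg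
    subst hf
    refine (Category.id_comp _).trans ?_
    refine Eq.trans ?_ (congrArg₂ (· ≫ ·) (Category.id_comp _).symm (Category.id_comp _).symm)
    exact υ.map_comp (homOfLE _) (homOfLE _)

/-- point -/
def pt (c : C) : SplxOver (nerve C) := ⟨⦋0⦌, ComposableArrows.mk₀ c⟩

/-- edge -/
def ed {c d : C} (f : c ⟶ d) : SplxOver (nerve C) := ⟨⦋1⦌, ComposableArrows.mk₁ f⟩

/-- triangle -/
def tri {c d e : C} (f : c ⟶ d) (g : d ⟶ e) : SplxOver (nerve C) :=
  ⟨⦋2⦌, ComposableArrows.mk₂ f g⟩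

/-- vertex inclusion -/
def vtx (A : SplxOver (nerve C)) (i : Fin (A.obj.len + 1)) : pt (A.simplex.obj i) ⟶ A where
  map := SimplexCategory.const ⦋0⦌ A.obj i
  fac := ComposableArrows.ext₀ rfl

/-- edge inclusion -/
def edge (A : SplxOver (nerve C)) (i j : Fin (A.obj.len + 1)) (h : i ≤ j) :
    ed (A.simplex.map (homOfLE h)) ⟶ A where
  map := SimplexCategory.mkOfLe (n := A.obj.len) i j h
  fac := ComposableArrows.ext₁ rfl rfl
    ((Category.comp_id _).symm.trans (Category.id_comp _).symm)

abbrev W (C : Type w) [Category.{v'} C] := lastVertex (nerve C)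

abbrev Q (C : Type w) [Category.{v'} C] := (W C).Q

lemma vtx_last (A : SplxOver (nerve C)) : W C (vtx A (Fin.last _)) := rfl

instance (A : SplxOver (nerve C)) : IsIso ((Q C).map (vtx A (Fin.last _))) :=
  (W C).Q_inverts _ (vtx_last A)

/-- source vertex of an edge -/
def v0 {c d : C} (f : c ⟶ d) : pt c ⟶ ed f := vtx (ed f) (0 : Fin 2)
/-- target vertex of an edge -/
def v1 {c d : C} (f : c ⟶ d) : pt d ⟶ ed f := vtx (ed f) (1 : Fin 2)

instance {c d : C} (f : c ⟶ d) : IsIso ((Q C).map (v1 f)) :=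
  (W C).Q_inverts _ (vtx_last (ed f))

/-- map of the inverse functor -/
noncomputable def gmap {c d : C} (f : c ⟶ d) : (Q C).obj (pt c) ⟶ (Q C).obj (pt d) :=
  (Q C).map (v0 f) ≫ inv ((Q C).map (v1 f))

lemma key (A : SplxOver (nerve C)) (i j : Fin (A.obj.len + 1)) (h : i ≤ j) :
    gmap (A.simplex.map (homOfLE h)) ≫ (Q C).map (vtx A j) = (Q C).map (vtx A i) := by
  have h1 : vtx A j = v1 (A.simplex.map (homOfLE h)) ≫ edge A i j h := by
    apply SplxOver.Hom.ext
    ext x : 3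
    rfl
  have h0 : vtx A i = v0 (A.simplex.map (homOfLE h)) ≫ edge A i j h := by
    apply SplxOver.Hom.ext
    ext x : 3
    rfl
  rw [h1, h0, Functor.map_comp, Functor.map_comp, gmap, Category.assoc, IsIso.inv_hom_id_assoc]

/-- inverse functor -/
noncomputable def G (C : Type w) [Category.{v'} C] : C ⥤ (W C).Localization where
  obj c := (Q C).obj (pt c)
  map f := gmap f
  map_id c := by
    have := key (pt c) (0 : Fin 1) (0 : Fin 1) le_rfl
    have hi : IsIso ((Q C).map (vtx (pt c) (0 : Fin 1))) := (W C).Q_inverts _ (vtx_last (pt c))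
    apply (cancel_mono ((Q C).map (vtx (pt c) (0 : Fin 1)))).1
    refine Eq.trans (congrArg (fun t => gmap t ≫ _) ((pt c).simplex.map_id (0 : Fin 1)).symm) ?_
    exact this.trans (Category.id_comp _).symm
  map_comp {c d e} f g := by
    have h01 : gmap f ≫ (Q C).map (vtx (tri f g) (1 : Fin 3)) =
      (Q C).map (vtx (tri f g) (0 : Fin 3)) := key (tri f g) (0 : Fin 3) (1 : Fin 3) (show (0 : Fin 3) ≤ 1 by decide)
    have h12 : gmap g ≫ (Q C).map (vtx (tri f g) (2 : Fin 3)) =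
      (Q C).map (vtx (tri f g) (1 : Fin 3)) := key (tri f g) (1 : Fin 3) (2 : Fin 3) (show (1 : Fin 3) ≤ 2 by decide)
    have h02 : gmap (f ≫ g) ≫ (Q C).map (vtx (tri f g) (2 : Fin 3)) =
      (Q C).map (vtx (tri f g) (0 : Fin 3)) := key (tri f g) (0 : Fin 3) (2 : Fin 3) (show (0 : Fin 3) ≤ 2 by decide)
    have : IsIso ((Q C).map (vtx (tri f g) (2 : Fin 3))) := (W C).Q_inverts _ (vtx_last (tri f g))
    apply (cancel_mono ((Q C).map (vtx (tri f g) (2 : Fin 3)))).1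
    refine h02.trans ?_
    refine Eq.trans ?_ (Category.assoc _ _ _).symm
    exact h01.symm.trans (congrArg (gmap f ≫ ·) h12.symm)

/-- comparison -/
noncomputable def iso1 (C : Type w) [Category.{v'} C] : L C ⋙ G C ≅ Q C :=
  NatIso.ofComponents (fun A =>
    @asIso _ _ _ _ ((Q C).map (vtx A (Fin.last _))) ((W C).Q_inverts _ (vtx_last A))) (by
    intro A B f
    obtain ⟨a, σ⟩ := A
    obtain ⟨b, τ⟩ := B
    obtain ⟨f, hf⟩ := f
    change a ⟶ b at f
    change (nerve C).map f.op τ = σ at hf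
    subst hf
    have hL : (L C).map (⟨f, rfl⟩ : SplxOver.Hom ⟨a, (nerve C).map f.op τ⟩ ⟨b, τ⟩) =
      τ.map (homOfLE (Fin.le_last (f.toOrderHom (Fin.last _)))) := Category.id_comp _
    have k := key ⟨b, τ⟩ _ _ (Fin.le_last (f.toOrderHom (Fin.last _)))
    refine Eq.trans (congrArg (fun t => gmap t ≫ _) hL) ?_
    refine k.trans ?_
    refine Eq.trans ?_ ((Q C).map_comp _ _)
    congr 1)

lemma L_inverts (C : Type w) [Category.{v'} C] : (W C).IsInvertedBy (L C) := by
  intro A B f hf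
  have : IsIso (B.simplex.map (homOfLE (Fin.le_last (f.map.toOrderHom (Fin.last _))))) := by
    have e : homOfLE (Fin.le_last (f.map.toOrderHom (Fin.last _))) = eqToHom hf :=
      Subsingleton.elim _ _
    rw [e]
    exact (B.simplex.mapIso (eqToIso hf)).isIso_hom
  exact IsIso.comp_isIso' (eqToIso (nerve_simplex_obj_eq f)).isIso_hom this

lemma L_gmap {c d : C} (f : c ⟶ d) :
    (Localization.Construction.lift (L C) (L_inverts C)).map (gmap f) = f := by
  have h0 : (L C).map (v0 f) = f := Category.id_comp _
  have h1 : (L C).map (v1 f) = 𝟙 d := Category.id_comp _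
  have e : gmap f ≫ (Q C).map (v1 f) = (Q C).map (v0 f) := by simp [gmap]
  have e' := congrArg (Localization.Construction.lift (L C) (L_inverts C)).map e
  rw [Functor.map_comp] at e'
  have hh : ∀ {A B : SplxOver (nerve C)} (g : A ⟶ B),
      (Localization.Construction.lift (L C) (L_inverts C)).map ((Q C).map g) = (L C).map g := by
    intro A B g
    have := Functor.congr_hom (Localization.Construction.fac (L C) (L_inverts C)) g
    refine this.trans ((Category.id_comp _).trans (Category.comp_id _))
  rw [hh, hh] at e'
  have e2 : (Localization.Construction.lift (L C) (L_inverts C)).map (gmap f) ≫ (L C).map (v1 f)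
    = (L C).map (v0 f) := e'
  rw [h0, h1] at e2
  exact (Category.comp_id _).symm.trans e2

noncomputable def iso2 (C : Type w) [Category.{v'} C] :
    G C ⋙ Localization.Construction.lift (L C) (L_inverts C) ≅ 𝟭 C :=
  NatIso.ofComponents (fun c => Iso.refl c) (by
    intro c d f
    refine (Category.comp_id _).trans (Eq.trans ?_ (Category.id_comp _).symm)
    exact L_gmap f)

lemma L_isLocalization (C : Type w) [Category.{v'} C] : (L C).IsLocalization (W C) where
  inverts := L_inverts C
  isEquivalence := by
    let F := Localization.Construction.lift (L C) (L_inverts C)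
    have hF : Q C ⋙ F = L C := Localization.Construction.fac _ _
    let η : F ⋙ G C ≅ 𝟭 _ := Localization.liftNatIso (Q C) (W C) (Q C ⋙ F ⋙ G C) (Q C) _ _
      (Functor.isoWhiskerRight (eqToIso hF) (G C) ≪≫ iso1 C)
    exact (CategoryTheory.Equivalence.mk F (G C) η.symm (iso2 C)).isEquivalence_functor

end LVLoc

/-- for every category `C`, the last-vertex functor `Δ/N(C) ⥤ C`, sending
`([n], σ)` to `σ(n)` and a morphism `a : ([n], σ) ⟶ ([m], τ)` to
`τ(a(n) ≤ m) : σ(n) → τ(m)`, exhibits `C` as the localization of `Δ/N(C)` at the class of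
last-vertex morphisms. -/
theorem lastVertex_functor_isLocalization (C : Type w) [Category.{v'} C] :
    ∃ (L : SplxOver (nerve C) ⥤ C) (h : ∀ A : SplxOver (nerve C),
        L.obj A = A.simplex.obj (Fin.last A.obj.len)),
      (∀ (A B : SplxOver (nerve C)) (f : A ⟶ B),
        L.map f = eqToHom (h A) ≫ eqToHom (nerve_simplex_obj_eq f) ≫
          B.simplex.map (homOfLE (Fin.le_last _)) ≫ eqToHom (h B).symm) ∧
      L.IsLocalization (lastVertex (nerve C)) := by
  refine ⟨LVLoc.L C, fun _ => rfl, ?_, LVLoc.L_isLocalization C⟩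
  intro A B f
  refine Eq.trans ?_ (Category.id_comp _).symm
  exact congrArg (_ ≫ ·) (Category.comp_id _).symm
end

section
/- For every simplicial set X, there is an equivalence of categories between the 1-categorical localization (Δ/X)[lv⁻¹] of the category of simplices of X at the last-vertex morphisms and the homotopy category hoFunctor.obj X (the value at X of the left adjoint of the nerve functor Cat ⥤ SSet). -/
open CategoryTheory Simplicial

universe u

open Opposite

namespace LvLoc

abbrev TX (X : SSet.{0}) : SSet.Truncated.{0} 2 := (SSet.truncation 2).obj X

abbrev H (X : SSet.{0}) : Type := SSet.Truncated.HomotopyCategory (TX X)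

variable {X : SSet.{0}}

def mkV (x : X.obj (op ⦋0⦌)) : H X := SSet.Truncated.HomotopyCategory.mk (V := TX X) x

def mkE (s : X.obj (op ⦋1⦌)) {x y : X.obj (op ⦋0⦌)}
    (h1 : X.map (SimplexCategory.δ (1 : Fin 2)).op s = x)
    (h0 : X.map (SimplexCategory.δ (0 : Fin 2)).op s = y) :
    SSet.Truncated.Edge (X := TX X) x y := ⟨s, h1, h0⟩

def mkHo (s : X.obj (op ⦋1⦌)) {x y : X.obj (op ⦋0⦌)}
    (h1 : X.map (SimplexCategory.δ (1 : Fin 2)).op s = x)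
    (h0 : X.map (SimplexCategory.δ (0 : Fin 2)).op s = y) : mkV x ⟶ mkV y :=
  SSet.Truncated.HomotopyCategory.homMk (mkE s h1 h0)

lemma mkHo_deg (s : X.obj (op ⦋1⦌)) {x y : X.obj (op ⦋0⦌)}
    (h1 : X.map (SimplexCategory.δ (1 : Fin 2)).op s = x)
    (h0 : X.map (SimplexCategory.δ (0 : Fin 2)).op s = y)
    (h : s = X.map (SimplexCategory.σ (0 : Fin 1)).op x) (hxy : x = y) :
    mkHo s h1 h0 = eqToHom (by rw [hxy]) := by
  subst hxy
  subst h
  exact SSet.Truncated.HomotopyCategory.homMk_id (V := TX X) x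

lemma mkHo_congr (s s' : X.obj (op ⦋1⦌)) {x y x' y' : X.obj (op ⦋0⦌)}
    (h1 : X.map (SimplexCategory.δ (1 : Fin 2)).op s = x)
    (h0 : X.map (SimplexCategory.δ (0 : Fin 2)).op s = y)
    (h1' : X.map (SimplexCategory.δ (1 : Fin 2)).op s' = x')
    (h0' : X.map (SimplexCategory.δ (0 : Fin 2)).op s' = y')
    (h : s = s') (hx : x = x') (hy : y = y') :
    mkHo s h1 h0 = eqToHom (by rw [hx]) ≫ mkHo s' h1' h0' ≫ eqToHom (by rw [hy]) := by
  subst hx hy h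
  simp

lemma mkHo_comp (t : X.obj (op ⦋2⦌)) {a b c : X.obj (op ⦋1⦌)} {x y z : X.obj (op ⦋0⦌)}
    (a1 : X.map (SimplexCategory.δ (1 : Fin 2)).op a = x)
    (a0 : X.map (SimplexCategory.δ (0 : Fin 2)).op a = y)
    (b1 : X.map (SimplexCategory.δ (1 : Fin 2)).op b = y)
    (b0 : X.map (SimplexCategory.δ (0 : Fin 2)).op b = z)
    (c1 : X.map (SimplexCategory.δ (1 : Fin 2)).op c = x)
    (c0 : X.map (SimplexCategory.δ (0 : Fin 2)).op c = z)
    (t2 : X.map (SimplexCategory.δ (2 : Fin 3)).op t = a)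
    (t0 : X.map (SimplexCategory.δ (0 : Fin 3)).op t = b)
    (t1 : X.map (SimplexCategory.δ (1 : Fin 3)).op t = c) :
    mkHo a a1 a0 ≫ mkHo b b1 b0 = mkHo c c1 c0 :=
  SSet.Truncated.HomotopyCategory.homMk_comp_homMk (V := TX X)
    (e₀₁ := mkE a a1 a0) (e₁₂ := mkE b b1 b0) (e₀₂ := mkE c c1 c0) ⟨t, t2, t0, t1⟩

lemma map_map {a b c : SimplexCategory} (f : a ⟶ b) (g : b ⟶ c) (x : X.obj (op c)) :
    X.map f.op (X.map g.op x) = X.map (f ≫ g).op x := by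
  simp

/-- last vertex -/
abbrev lst (n : SimplexCategory) : ⦋0⦌ ⟶ n := SimplexCategory.const ⦋0⦌ n (Fin.last _)

/-- the edge from `a(n)` to `m` -/
abbrev edg {n m : SimplexCategory} (a : n ⟶ m) : ⦋1⦌ ⟶ m :=
  SimplexCategory.mkOfLe (n := m.len) (a.toOrderHom (Fin.last _)) (Fin.last _) (Fin.le_last _)

abbrev tri {n m k : SimplexCategory} (a : n ⟶ m) (b : m ⟶ k) : ⦋2⦌ ⟶ k :=
  SimplexCategory.mkOfLeComp (n := k.len) (b.toOrderHom (a.toOrderHom (Fin.last _)))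
    (b.toOrderHom (Fin.last _)) (Fin.last _)
    (b.toOrderHom.monotone (Fin.le_last _)) (Fin.le_last _)

lemma d1_edg {n m : SimplexCategory} (a : n ⟶ m) :
    SimplexCategory.δ (1 : Fin 2) ≫ edg a = lst n ≫ a :=
  SimplexCategory.Hom.ext_zero_left _ _

lemma d0_edg {n m : SimplexCategory} (a : n ⟶ m) :
    SimplexCategory.δ (0 : Fin 2) ≫ edg a = lst m :=
  SimplexCategory.Hom.ext_zero_left _ _

lemma d2_tri {n m k : SimplexCategory} (a : n ⟶ m) (b : m ⟶ k) :
    SimplexCategory.δ (2 : Fin 3) ≫ tri a b = edg a ≫ b :=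
  SimplexCategory.Hom.ext_one_left _ _

lemma d0_tri {n m k : SimplexCategory} (a : n ⟶ m) (b : m ⟶ k) :
    SimplexCategory.δ (0 : Fin 3) ≫ tri a b = edg b :=
  SimplexCategory.Hom.ext_one_left _ _

lemma d1_tri {n m k : SimplexCategory} (a : n ⟶ m) (b : m ⟶ k) :
    SimplexCategory.δ (1 : Fin 3) ≫ tri a b = edg (a ≫ b) :=
  SimplexCategory.Hom.ext_one_left _ _

lemma edg_lv {n m : SimplexCategory} (a : n ⟶ m)
    (h : a.toOrderHom (Fin.last _) = Fin.last _) :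
    edg a = SimplexCategory.σ (0 : Fin 1) ≫ lst m :=
  SimplexCategory.Hom.ext_one_left _ _ h rfl

lemma lst_lv {n m : SimplexCategory} (a : n ⟶ m)
    (h : a.toOrderHom (Fin.last _) = Fin.last _) :
    lst n ≫ a = lst m :=
  SimplexCategory.Hom.ext_zero_left _ _ h

def lv (A : SplxOver X) : X.obj (op ⦋0⦌) := X.map (lst A.obj).op A.simplex

lemma h1 {A B : SplxOver X} (f : A ⟶ B) :
    X.map (SimplexCategory.δ (1 : Fin 2)).op (X.map (edg f.map).op B.simplex) = lv A := by
  rw [map_map, d1_edg, ← map_map, f.fac]; rfl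

lemma h0 {A B : SplxOver X} (f : A ⟶ B) :
    X.map (SimplexCategory.δ (0 : Fin 2)).op (X.map (edg f.map).op B.simplex) = lv B := by
  rw [map_map, d0_edg]; rfl

lemma lv_eq {A B : SplxOver X} (f : A ⟶ B) (hf : lastVertex X f) : lv A = lv B := by
  rw [← h1 f, map_map, d1_edg, lst_lv _ hf]; rfl

lemma mkHo_lv {A B : SplxOver X} (f : A ⟶ B) (hf : lastVertex X f) :
    mkHo _ (h1 f) (h0 f) = eqToHom (by rw [lv_eq f hf]) := by
  refine mkHo_deg _ _ _ ?_ (lv_eq f hf)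
  rw [edg_lv _ hf, ← map_map, lv_eq f hf]; rfl

lemma id_lv (A : SplxOver X) : lastVertex X (𝟙 A) := by
  show (SimplexCategory.Hom.toOrderHom (𝟙 A.obj)) _ = _
  rfl

def L (X : SSet.{0}) : SplxOver X ⥤ H X where
  obj A := mkV (lv A)
  map f := mkHo _ (h1 f) (h0 f)
  map_id A := by rw [mkHo_lv _ (id_lv A)]; rfl
  map_comp {A B C} f g := by
    symm
    refine mkHo_comp (X.map (tri f.map g.map).op C.simplex) _ _ _ _ _ _ ?_ ?_ ?_
    · rw [map_map, d2_tri, ← map_map, g.fac]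
    · rw [map_map, d0_tri]
    · rw [map_map, d1_tri]; rfl

lemma L_lv {A B : SplxOver X} (f : A ⟶ B) (hf : lastVertex X f) :
    (L X).map f = eqToHom (congrArg mkV (lv_eq f hf)) := mkHo_lv f hf

lemma L_inv : (lastVertex X).IsInvertedBy (L X) := by
  intro A B f hf
  rw [L_lv f hf]
  exact (eqToIso (congrArg mkV (lv_eq f hf))).isIso_hom

noncomputable def Φ (X : SSet.{0}) : (lastVertex X).Localization ⥤ H X :=
  Localization.lift (L X) L_inv (lastVertex X).Q

/-- basic objects -/
def ob {n : SimplexCategory} (x : X.obj (op n)) : SplxOver X := ⟨n, x⟩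

def hm {n m : SimplexCategory} (a : n ⟶ m) {x : X.obj (op n)} {y : X.obj (op m)}
    (h : X.map a.op y = x) : ob x ⟶ ob y := ⟨a, h⟩

lemma hm_comp {n m k : SimplexCategory} (a : n ⟶ m) (b : m ⟶ k) (c : n ⟶ k)
    {x : X.obj (op n)} {y : X.obj (op m)} {z : X.obj (op k)}
    (h : X.map a.op y = x) (h' : X.map b.op z = y) (h'' : X.map c.op z = x) (e : a ≫ b = c) :
    hm a h ≫ hm b h' = hm c h'' := by
  subst e; rfl

lemma hm_id {n : SimplexCategory} (a : n ⟶ n) {x : X.obj (op n)} (h : X.map a.op x = x)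
    (e : a = 𝟙 n) : hm a h = 𝟙 (ob x) := by
  subst e; rfl

noncomputable abbrev Q (X : SSet.{0}) := (lastVertex X).Q

lemma isIso_Q {A B : SplxOver X} (f : A ⟶ B) (hf : lastVertex X f) : IsIso ((Q X).map f) :=
  (lastVertex X).Q_inverts f hf

lemma isIso_d0 (s : X.obj (op ⦋1⦌)) {y : X.obj (op ⦋0⦌)}
    (h : X.map (SimplexCategory.δ (0 : Fin 2)).op s = y) :
    IsIso ((Q X).map (hm (SimplexCategory.δ (0 : Fin 2)) h)) :=
  isIso_Q _ (by show (SimplexCategory.Hom.toOrderHom _) _ = _; rfl)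

noncomputable def psiMap {x y : X.obj (op ⦋0⦌)} (e : SSet.Truncated.Edge (X := TX X) x y) :
    (Q X).obj (ob x) ⟶ (Q X).obj (ob y) :=
  haveI := isIso_d0 (X := X) e.edge e.tgt_eq
  (Q X).map (hm (x := x) (y := e.edge) (SimplexCategory.δ (1 : Fin 2)) e.src_eq) ≫
    inv ((Q X).map (hm (x := y) (y := e.edge) (SimplexCategory.δ (0 : Fin 2)) e.tgt_eq))

lemma psiMap_comp {x y : X.obj (op ⦋0⦌)} (e : SSet.Truncated.Edge (X := TX X) x y) :
    psiMap e ≫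
      (Q X).map (hm (x := y) (y := e.edge) (SimplexCategory.δ (0 : Fin 2)) e.tgt_eq) =
    (Q X).map (hm (x := x) (y := e.edge) (SimplexCategory.δ (1 : Fin 2)) e.src_eq) := by
  have := isIso_d0 (X := X) e.edge e.tgt_eq
  simp [psiMap]

/-- Extended characterization: for any `f : ([1], e) ⟶ B`. -/
lemma psiMap_comp' {x y : X.obj (op ⦋0⦌)} (e : SSet.Truncated.Edge (X := TX X) x y)
    {m : SimplexCategory} {z : X.obj (op m)} (a : ⦋1⦌ ⟶ m) (b c : ⦋0⦌ ⟶ m)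
    (ha : X.map a.op z = e.edge)
    (hb : SimplexCategory.δ (0 : Fin 2) ≫ a = b) (hc : SimplexCategory.δ (1 : Fin 2) ≫ a = c)
    (hb' : X.map b.op z = y) (hc' : X.map c.op z = x) :
    psiMap e ≫ (Q X).map (hm b hb') = (Q X).map (hm c hc') := by
  rw [← hm_comp (SimplexCategory.δ (0 : Fin 2)) a b e.tgt_eq ha hb' hb,
    ← hm_comp (SimplexCategory.δ (1 : Fin 2)) a c e.src_eq ha hc' hc,
    Functor.map_comp, Functor.map_comp, ← psiMap_comp e, Category.assoc]

lemma psiMap_id (x : X.obj (op ⦋0⦌)) :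
    psiMap (X := X) (SSet.Truncated.Edge.id (X := TX X) x) = 𝟙 _ := by
  have h : X.map (𝟙 (⦋0⦌ : SimplexCategory)).op x = x := by simp
  have := psiMap_comp' (X := X) (SSet.Truncated.Edge.id (X := TX X) x) (z := x)
    (SimplexCategory.σ (0 : Fin 1)) (𝟙 _) (𝟙 _) rfl
    (SimplexCategory.Hom.ext_zero_left _ _) (SimplexCategory.Hom.ext_zero_left _ _) h h
  rw [hm_id _ h rfl] at this
  simpa using this

lemma psiMap_comp_psiMap {x₀ x₁ x₂ : X.obj (op ⦋0⦌)}
    {e₀₁ : SSet.Truncated.Edge (X := TX X) x₀ x₁} {e₁₂ : SSet.Truncated.Edge (X := TX X) x₁ x₂}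
    {e₀₂ : SSet.Truncated.Edge (X := TX X) x₀ x₂}
    (t : SSet.Truncated.Edge.CompStruct e₀₁ e₁₂ e₀₂) :
    psiMap e₀₁ ≫ psiMap e₁₂ = psiMap e₀₂ := by
  let s : X.obj (op ⦋2⦌) := t.simplex
  have t2 : X.map (SimplexCategory.δ (2 : Fin 3)).op s = e₀₁.edge := t.d₂
  have t0 : X.map (SimplexCategory.δ (0 : Fin 3)).op s = e₁₂.edge := t.d₀
  have t1 : X.map (SimplexCategory.δ (1 : Fin 3)).op s = e₀₂.edge := t.d₁
  have v0 : X.map (SimplexCategory.const ⦋0⦌ ⦋2⦌ 0).op s = x₀ := by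
    rw [← e₀₁.src_eq, ← t2]
    refine Eq.trans ?_ (map_map _ _ _).symm
    rw [show SimplexCategory.const ⦋0⦌ ⦋2⦌ 0 = SimplexCategory.δ (1 : Fin 2) ≫
      SimplexCategory.δ (2 : Fin 3) from SimplexCategory.Hom.ext_zero_left _ _]
    rfl
  have v1 : X.map (SimplexCategory.const ⦋0⦌ ⦋2⦌ 1).op s = x₁ := by
    rw [← e₀₁.tgt_eq, ← t2]
    refine Eq.trans ?_ (map_map _ _ _).symm
    rw [show SimplexCategory.const ⦋0⦌ ⦋2⦌ 1 = SimplexCategory.δ (0 : Fin 2) ≫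
      SimplexCategory.δ (2 : Fin 3) from SimplexCategory.Hom.ext_zero_left _ _]
    rfl
  have v2 : X.map (SimplexCategory.const ⦋0⦌ ⦋2⦌ 2).op s = x₂ := by
    rw [← e₀₂.tgt_eq, ← t1]
    refine Eq.trans ?_ (map_map _ _ _).symm
    rw [show SimplexCategory.const ⦋0⦌ ⦋2⦌ 2 = SimplexCategory.δ (0 : Fin 2) ≫
      SimplexCategory.δ (1 : Fin 3) from SimplexCategory.Hom.ext_zero_left _ _]
    rfl
  have i2 : IsIso ((Q X).map (hm _ v2)) :=
    isIso_Q _ (by show (SimplexCategory.Hom.toOrderHom _) _ = _; rfl)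
  rw [← cancel_mono ((Q X).map (hm _ v2)), Category.assoc,
    psiMap_comp' e₁₂ _ _ _ t0 (SimplexCategory.Hom.ext_zero_left _ _)
      (SimplexCategory.Hom.ext_zero_left _ _) v2 v1,
    psiMap_comp' e₀₁ _ _ _ t2 (SimplexCategory.Hom.ext_zero_left _ _)
      (SimplexCategory.Hom.ext_zero_left _ _) v1 v0,
    psiMap_comp' e₀₂ _ _ _ t1 (SimplexCategory.Hom.ext_zero_left _ _)
      (SimplexCategory.Hom.ext_zero_left _ _) v2 v0]

noncomputable def Ψ (X : SSet.{0}) : H X ⥤ (lastVertex X).Localization :=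
  SSet.Truncated.HomotopyCategory.lift (V := TX X) (fun x => (Q X).obj (ob (n := ⦋0⦌) x))
    (fun e => psiMap e) (fun x => psiMap_id x) (fun t => psiMap_comp_psiMap t)

noncomputable def isoA (A : SplxOver X) : (Q X).obj (ob (lv A)) ≅ (Q X).obj A :=
  @asIso _ _ _ _ ((Q X).map (hm (lst A.obj) (x := lv A) (y := A.simplex) rfl))
    (isIso_Q _ (by show (SimplexCategory.Hom.toOrderHom _) _ = _; rfl))

noncomputable def isoL : L X ⋙ Ψ X ≅ Q X :=
  NatIso.ofComponents
    (fun A => isoA A)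
    (by
      intro A B f
      have h : X.map (lst A.obj ≫ f.map).op B.simplex = lv A := by
        rw [← map_map, f.fac]; rfl
      have e1 : (L X ⋙ Ψ X).map f = psiMap (mkE _ (h1 f) (h0 f)) :=
        SSet.Truncated.HomotopyCategory.lift_map_homMk (V := TX X) _ _ (fun x => psiMap_id x)
          (fun t => psiMap_comp_psiMap t) _
      have e2 := psiMap_comp' (mkE _ (h1 f) (h0 f)) (z := B.simplex) (edg f.map) (lst B.obj)
        (lst A.obj ≫ f.map) rfl (d0_edg _) (d1_edg _) rfl h
      rw [e1]
      refine e2.trans ?_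
      exact (Q X).map_comp (hm (lst A.obj) (x := lv A) (y := A.simplex) rfl) f)

noncomputable abbrev fc (X : SSet.{0}) : Q X ⋙ Φ X ≅ L X :=
  Localization.fac (L X) L_inv (Q X)

noncomputable def iso1 : Φ X ⋙ Ψ X ≅ 𝟭 _ :=
  letI : Localization.Lifting (Q X) (lastVertex X) (L X ⋙ Ψ X) (Φ X ⋙ Ψ X) :=
    ⟨(Functor.associator _ _ _).symm ≪≫ Functor.isoWhiskerRight (fc X) (Ψ X)⟩
  Localization.liftNatIso (Q X) (lastVertex X) (L X ⋙ Ψ X) (Q X) _ _ isoL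

lemma lv_ob (x : X.obj (op ⦋0⦌)) : lv (ob x) = x := by
  show X.map (lst ⦋0⦌).op x = x
  rw [show lst ⦋0⦌ = 𝟙 _ from SimplexCategory.Hom.ext_zero_left _ _]
  simp

lemma Φ_psi {x y : X.obj (op ⦋0⦌)} (e : SSet.Truncated.Edge (X := TX X) x y) :
    (Φ X).map (psiMap e) ≫ (fc X).hom.app (ob y) ≫ eqToHom (congrArg mkV (lv_ob y)) =
      (fc X).hom.app (ob x) ≫ eqToHom (congrArg mkV (lv_ob x)) ≫
        mkHo e.edge e.src_eq e.tgt_eq := by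
  let d0 := hm (X := X) (x := y) (y := e.edge) (SimplexCategory.δ (0 : Fin 2)) e.tgt_eq
  let d1 := hm (X := X) (x := x) (y := e.edge) (SimplexCategory.δ (1 : Fin 2)) e.src_eq
  have hd0 : lastVertex X d0 := by show (SimplexCategory.Hom.toOrderHom _) _ = _; rfl
  have k := congrArg (fun t => (Φ X).map t ≫ (fc X).hom.app (ob e.edge)) (psiMap_comp (X := X) e)
  have n0 := (fc X).hom.naturality d0
  have n1 := (fc X).hom.naturality d1
  have l1 : (L X).map d1 = eqToHom (congrArg mkV (lv_ob x)) ≫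
        mkHo e.edge e.src_eq e.tgt_eq ≫
        eqToHom (congrArg mkV ((lv_ob y).symm.trans (lv_eq d0 hd0))) := by
    refine mkHo_congr _ _ _ _ _ _ ?_ (lv_ob x) ((lv_ob y).symm.trans (lv_eq d0 hd0)).symm
    show X.map (edg (SimplexCategory.δ (1 : Fin 2))).op e.edge = e.edge
    rw [show edg (SimplexCategory.δ (1 : Fin 2)) = 𝟙 _ from
      SimplexCategory.Hom.ext_one_left _ _]
    exact Functor.map_id_apply X _ _
  have l0 := L_lv d0 hd0
  simp only [Functor.map_comp, Category.assoc] at k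
  erw [n0, n1, l1, l0] at k
  rw [← cancel_mono (eqToHom (congrArg mkV ((lv_ob y).symm.trans (lv_eq d0 hd0))))]
  simp only [Category.assoc]
  refine Eq.trans ?_ k
  congr 2
  exact eqToHom_trans _ _

noncomputable def iso2 : Ψ X ⋙ Φ X ≅ 𝟭 _ :=
  SSet.Truncated.HomotopyCategory.mkNatIso (V := TX X)
    (fun x => (fc X).app (ob (n := ⦋0⦌) x) ≪≫ eqToIso (congrArg mkV (lv_ob x)))
    (by
      intro x y e
      have e1 : (Ψ X).map (SSet.Truncated.HomotopyCategory.homMk e) = psiMap e :=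
        SSet.Truncated.HomotopyCategory.lift_map_homMk (V := TX X) _ _ (fun x => psiMap_id x)
          (fun t => psiMap_comp_psiMap t) _
      have := Φ_psi (X := X) e
      rw [Functor.comp_map, e1]
      exact this.trans (Category.assoc _ _ _).symm)

end LvLoc

/-- for every simplicial set `X`, the localization `(Δ/X)[lv⁻¹]` of the
category of simplices of `X` at the last-vertex morphisms is equivalent to the homotopy
category of `X`, i.e. to the value at `X` of (any) left adjoint of the nerve functor
`Cat ⥤ SSet`. -/
theorem localization_equiv_hoFunctor (ho : SSet.{0} ⥤ Cat.{0, 0})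
    (adj : ho ⊣ nerveFunctor) (X : SSet.{0}) :
    Nonempty ((lastVertex X).Localization ≌ ho.obj X) := by
  have e : ho.obj X ≅ SSet.hoFunctor.obj X := (adj.leftAdjointUniq nerveAdjunction).app X
  exact ⟨(CategoryTheory.Equivalence.mk (LvLoc.Φ X) (LvLoc.Ψ X) LvLoc.iso1.symm
    LvLoc.iso2).trans (Cat.equivOfIso e).symm⟩
end
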